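/- Let M > M₁(Ω₁) and let u^ε be the strictly k-convex solution of problem (2.1), assumed C² up to ∂B_ε(0). Then there exist constants C₁, C₂ > 0, depending on n, k, Ω₁ and M but independent of ε, such that for every p ∈ ∂B_ε(0), with ν = p/ε the unit normal pointing into Ω^ε, the double normal second derivative satisfies −C₁·(Du^ε(p)·ν)·ε^{−1} ≤ D²u^ε(p)(ν, ν) ≤ C₂·(Du^ε(p)·ν)·ε^{−1}. -/

import Mathlib

open Set Metric Filter Topology Bornology
open scoped RealInnerProductSpace

noncomputable section

/-- Euclidean `n`-space. -/
abbrev Euc (n : ℕ) := EuclideanSpace ℝ (Fin n)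

/-- The `k`-th elementary symmetric polynomial of a vector `lam ∈ ℝⁿ`. -/
def esymmVec {n : ℕ} (k : ℕ) (lam : Fin n → ℝ) : ℝ :=
  ∑ S ∈ Finset.powersetCard k (Finset.univ : Finset (Fin n)), ∏ i ∈ S, lam i

/-- `σ_k(A)`: the `k`-th elementary symmetric polynomial of the eigenvalues of a
symmetric matrix `A` (junk value `0` if `A` is not symmetric). -/
noncomputable def sigmaMat {n : ℕ} (k : ℕ) (A : Matrix (Fin n) (Fin n) ℝ) : ℝ := by
  classical exact if h : A.IsHermitian then esymmVec k h.eigenvalues else 0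

/-- The eigenvalues of the symmetric matrix `A` lie in the Gårding cone
`Γ_k = {λ : σ_j(λ) > 0, j = 1, …, k}`. -/
def InGardingCone {n : ℕ} (k : ℕ) (A : Matrix (Fin n) (Fin n) ℝ) : Prop :=
  ∃ h : A.IsHermitian, ∀ j : ℕ, 1 ≤ j → j ≤ k → 0 < esymmVec j h.eigenvalues

/-- The Hessian matrix of `u` at `x`, with derivatives taken within the set `s`. -/
noncomputable def hessianWithin {n : ℕ} (u : Euc n → ℝ) (s : Set (Euc n)) (x : Euc n) :
    Matrix (Fin n) (Fin n) ℝ :=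
  fun i j => iteratedFDerivWithin ℝ 2 u s x
    ![EuclideanSpace.single i (1:ℝ), EuclideanSpace.single j (1:ℝ)]

/-- The Hessian matrix `D²u(x)` of `u` at `x`. -/
noncomputable def hessian {n : ℕ} (u : Euc n → ℝ) (x : Euc n) : Matrix (Fin n) (Fin n) ℝ :=
  fun i j => iteratedFDeriv ℝ 2 u x
    ![EuclideanSpace.single i (1:ℝ), EuclideanSpace.single j (1:ℝ)]

/-- Operator norm of the Hessian matrix of `u` at `x` (derivatives within `s`). -/
noncomputable def hessOpNormWithin {n : ℕ} (u : Euc n → ℝ) (s : Set (Euc n)) (x : Euc n) : ℝ :=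
  ‖Matrix.toEuclideanCLM (𝕜 := ℝ) (hessianWithin u s x)‖

/-- A set has smooth boundary: it is the sublevel set of a smooth defining function
with nonvanishing differential on the boundary. -/
def HasSmoothBoundary {n : ℕ} (Ω : Set (Euc n)) : Prop :=
  ∃ ρ : Euc n → ℝ, ContDiff ℝ (⊤ : ℕ∞) ρ ∧ Ω = {x | ρ x < 0} ∧
    ∀ x ∈ frontier Ω, fderiv ℝ ρ x ≠ 0

/-- `c_{n,k} = (C(n,k))^{1/k}` where `C(n,k)` is the binomial coefficient. -/
noncomputable def cnk (n k : ℕ) : ℝ := (n.choose k : ℝ) ^ ((1:ℝ)/(k:ℝ))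

/-- The radially symmetric subsolution `|x - x₀|²/(2c_{n,k}) − ε²/(2c_{n,k}) − M`. -/
noncomputable def underSol {n : ℕ} (k : ℕ) (x₀ : Euc n) (ε M : ℝ) (x : Euc n) : ℝ :=
  ‖x - x₀‖^2 / (2 * cnk n k) - ε^2 / (2 * cnk n k) - M

/-- The closed ring `Ω̄^ε = closure (Ω₁ \ B̄_ε(x₀))`. -/
def ringSet {n : ℕ} (Ω₁ : Set (Euc n)) (x₀ : Euc n) (ε : ℝ) : Set (Euc n) :=
  closure (Ω₁ \ closedBall x₀ ε)

/-- `u` is a strictly `k`-convex solution of problem (2.1):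
`σ_k(D²u) = 1` in `Ω^ε = Ω₁ \ B̄_ε(x₀)`, `u = 0` on `∂Ω₁`, `u = −M` on `∂B_ε(x₀)`,
with `u ∈ C²(Ω̄^ε)`. -/
def IsSol {n : ℕ} (k : ℕ) (Ω₁ : Set (Euc n)) (x₀ : Euc n) (ε M : ℝ) (u : Euc n → ℝ) : Prop :=
  ContDiffOn ℝ 2 u (ringSet Ω₁ x₀ ε) ∧
  (∀ x ∈ Ω₁ \ closedBall x₀ ε,
      InGardingCone k (hessianWithin u (ringSet Ω₁ x₀ ε) x) ∧
      sigmaMat k (hessianWithin u (ringSet Ω₁ x₀ ε) x) = 1) ∧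
  (∀ x ∈ frontier Ω₁, u x = 0) ∧
  (∀ x ∈ sphere x₀ ε, u x = -M)

/-- `ψ` is a strictly `k`-convex solution of problem (2.2):
`σ_k(D²ψ) = 1` in `Ω₁`, `ψ = 0` on `∂Ω₁`, with `ψ ∈ C^∞(Ω̄₁)`. -/
def IsSol22 {n : ℕ} (k : ℕ) (Ω₁ : Set (Euc n)) (ψ : Euc n → ℝ) : Prop :=
  ContDiffOn ℝ (⊤ : ℕ∞) ψ (closure Ω₁) ∧
  (∀ x ∈ Ω₁, InGardingCone k (hessianWithin ψ (closure Ω₁) x) ∧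
      sigmaMat k (hessianWithin ψ (closure Ω₁) x) = 1) ∧
  (∀ x ∈ frontier Ω₁, ψ x = 0)

/-- `u` is a strictly `k`-convex solution of the Dirichlet problem on the convex ring
`Ω = Ω₁ \ Ω̄₂`: `σ_k(D²u) = 1` in `Ω`, `u = 0` on `∂Ω₁`, `u = −M` on `∂Ω₂`,
with `u ∈ C²(Ω̄)`. -/
def IsSolRing {n : ℕ} (k : ℕ) (Ω₁ Ω₂ : Set (Euc n)) (M : ℝ) (u : Euc n → ℝ) : Prop :=
  ContDiffOn ℝ 2 u (closure (Ω₁ \ closure Ω₂)) ∧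
  (∀ x ∈ Ω₁ \ closure Ω₂,
      InGardingCone k (hessianWithin u (closure (Ω₁ \ closure Ω₂)) x) ∧
      sigmaMat k (hessianWithin u (closure (Ω₁ \ closure Ω₂)) x) = 1) ∧
  (∀ x ∈ frontier Ω₁, u x = 0) ∧
  (∀ x ∈ frontier Ω₂, u x = -M)

/-- The extension `ũ` of `u`, equal to `−M` on the closed ball `B̄_ε(x₀)`. -/
noncomputable def extendBy {n : ℕ} (u : Euc n → ℝ) (x₀ : Euc n) (ε M : ℝ) (x : Euc n) : ℝ := by
  classical exact if x ∈ closedBall x₀ ε then -M else u x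

/-- The extension `ũ` of `u`, equal to `−M` on the set `Ω₂`. -/
noncomputable def extendOn {n : ℕ} (u : Euc n → ℝ) (Ω₂ : Set (Euc n)) (M : ℝ) (x : Euc n) : ℝ := by
  classical exact if x ∈ Ω₂ then -M else u x

/-- The quadratic polynomial with Hessian `A`, linear part `b` and constant term `c`. -/
noncomputable def quadPoly {n : ℕ} (A : Matrix (Fin n) (Fin n) ℝ) (b : Euc n) (c : ℝ)
    (x : Euc n) : ℝ :=
  (∑ i, ∑ j, A i j * x i * x j) / 2 + ⟪b, x⟫ + c


section PolyPart
open Polynomial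

lemma splits_derivative {p : ℝ[X]} (hp : p.Splits) : (derivative p).Splits := by
  by_cases h0 : p.natDegree = 0
  · rw [derivative_of_natDegree_zero h0]; exact Splits.zero
  rw [splits_iff_card_roots]
  have h1 := card_roots_le_derivative p
  have h2 := card_roots' (derivative p)
  have h3 := natDegree_derivative_lt h0
  have h4 := hp.natDegree_eq_card_roots
  omega

lemma splits_iter {p : ℝ[X]} (hp : p.Splits) (m : ℕ) : (derivative^[m] p).Splits := by
  induction m with
  | zero => simpa
  | succ m ih => rw [Function.iterate_succ_apply']; exact splits_derivative ih

lemma laguerre {p : ℝ[X]} (hp : p.Splits) (x : ℝ) :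
    p.eval x * (derivative (derivative p)).eval x ≤ ((derivative p).eval x) ^ 2 := by
  rw [hp.eq_prod_roots]
  have key : ∀ s : Multiset ℝ, (s.map (X - C ·)).prod.eval x *
      (derivative (derivative (s.map (X - C ·)).prod)).eval x ≤
      ((derivative (s.map (X - C ·)).prod).eval x) ^ 2 := by
    intro s
    induction s using Multiset.induction with
    | empty => simp
    | cons a s ih =>
      simp only [Multiset.map_cons, Multiset.prod_cons, derivative_mul, derivative_sub,
        derivative_X, derivative_C, derivative_add, sub_zero, one_mul, eval_mul, eval_add, eval_sub,
        eval_X, eval_C] at ih ⊢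
      set g := (Multiset.map (fun x => X - C x) s).prod
      nlinarith [sq_nonneg (g.eval x), mul_nonneg (sq_nonneg (x - a)) (sub_nonneg.2 ih)]
  have := key p.roots
  simp only [derivative_mul, derivative_C, zero_mul, zero_add, eval_mul, eval_C]
  nlinarith [mul_nonneg (sq_nonneg p.leadingCoeff) (sub_nonneg.2 this)]

lemma newton_coeff {q : ℝ[X]} (hq : q.Splits) (m : ℕ) :
    q.coeff m * q.coeff (m + 2) ≤ q.coeff (m + 1) ^ 2 := by
  have h := laguerre (splits_iter hq m) 0
  rw [← Function.iterate_succ_apply' (f := derivative), ← Function.iterate_succ_apply' (f := derivative)] at h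
  simp only [← coeff_zero_eq_eval_zero, coeff_iterate_derivative, zero_add, Nat.descFactorial_self,
    nsmul_eq_mul] at h
  rcases le_or_gt (q.coeff m * q.coeff (m + 2)) 0 with h1 | h1
  · exact h1.trans (sq_nonneg _)
  have e1 : ((m + 1).factorial : ℝ) = (m + 1) * m.factorial := by
    rw [Nat.factorial_succ]; push_cast; ring
  have e2 : ((m + 1 + 1).factorial : ℝ) = (m + 2) * ((m + 1) * m.factorial) := by
    rw [Nat.factorial_succ, Nat.factorial_succ]; push_cast; ring
  simp only [Nat.succ_eq_add_one] at h
  rw [e1, e2] at h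
  have hf : (0 : ℝ) < m.factorial := by exact_mod_cast Nat.factorial_pos m
  have hc : (0 : ℝ) < (m.factorial : ℝ) ^ 2 * (m + 1) := by positivity
  have h' : ((m.factorial : ℝ) ^ 2 * (m + 1)) * ((m + 2) * (q.coeff m * q.coeff (m + 2))) ≤
     ((m.factorial : ℝ) ^ 2 * (m + 1)) * ((m + 1) * q.coeff (m + 1) ^ 2) := by
    have : m + 1 + 1 = m + 2 := rfl
    rw [this] at h
    nlinarith [h]
  have h2 := le_of_mul_le_mul_left h' hc
  have hm : (0 : ℝ) ≤ m := Nat.cast_nonneg m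
  have h3 : (m + 1 : ℝ) * (q.coeff m * q.coeff (m + 2)) ≤ (m + 1) * q.coeff (m + 1) ^ 2 := by
    nlinarith
  exact le_of_mul_le_mul_left h3 (by positivity)

lemma sign_coeff {q : ℝ[X]} (hq : q.Splits) (hm : q.Monic) (a : ℝ) {m0 : ℕ}
    (h : ∀ m, m0 ≤ m → m ≤ q.natDegree + 1 → 0 < ((X + C a) * q).coeff m) :
    ∀ d m, m + d = q.natDegree → m0 ≤ m → 0 < q.coeff m := by
  intro d
  induction d with
  | zero =>
    intro m hmd _
    have : m = q.natDegree := by omega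
    subst this
    rw [hm.coeff_natDegree]; norm_num
  | succ d ih =>
    intro m hmd h0
    have hy := ih (m + 1) (by omega) (by omega)
    by_contra hneg
    push Not at hneg
    have p1 := h (m + 1) (by omega) (by omega)
    have p0 := h m h0 (by omega)
    rw [add_mul, coeff_add, coeff_X_mul, coeff_C_mul] at p1
    have ha : 0 < a := by
      by_contra ha
      push Not at ha
      nlinarith [mul_nonneg (neg_nonneg.2 ha) hy.le]
    cases m with
    | zero =>
      rw [add_mul, coeff_add, coeff_C_mul, mul_coeff_zero, coeff_X_zero] at p0
      nlinarith
    | succ j =>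
      rw [add_mul, coeff_add, coeff_X_mul, coeff_C_mul] at p0
      have hN := newton_coeff hq j
      have e : j + 1 + 1 = j + 2 := rfl
      rw [e] at *
      nlinarith [mul_pos p0 hy, mul_nonneg (neg_nonneg.2 hneg) p1.le]

/-- Mahler-type inequality. -/
lemma mahler_ineq {ι : Type*} (s : Finset ι) (μ : ι → ℝ) (hμ : ∀ i ∈ s, 0 < μ i) (τ g : ℝ)
    (hτ : 0 ≤ τ) (hg : 0 < g) (h : ∏ i ∈ s, μ i = g ^ s.card) :
    (τ + g) ^ s.card ≤ ∏ i ∈ s, (τ + μ i) := by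
  rcases s.eq_empty_or_nonempty with rfl | hs
  · simp
  have hc : (0 : ℝ) < s.card := by exact_mod_cast hs.card_pos
  have hpos : ∀ i ∈ s, 0 < τ + μ i := fun i hi => by have := hμ i hi; linarith
  set D := ∏ i ∈ s, (τ + μ i)
  have hD : 0 < D := Finset.prod_pos hpos
  have am : ∀ z : ι → ℝ, (∀ i ∈ s, 0 ≤ z i) →
      (∏ i ∈ s, z i) ^ ((s.card : ℝ)⁻¹) ≤ (s.card : ℝ)⁻¹ * ∑ i ∈ s, z i := by
    intro z hz
    have := Real.geom_mean_le_arith_mean_weighted s (fun _ => (s.card : ℝ)⁻¹) z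
      (fun i _ => by positivity) (by simp [hc.ne']) hz
    rwa [Real.finsetProd_rpow _ _ hz, ← Finset.mul_sum] at this
  have a1 := am (fun i => τ / (τ + μ i)) (fun i hi => div_nonneg hτ (hpos i hi).le)
  have a2 := am (fun i => μ i / (τ + μ i)) (fun i hi => div_nonneg (hμ i hi).le (hpos i hi).le)
  rw [Finset.prod_div_distrib] at a1 a2
  have hsum : (s.card : ℝ)⁻¹ * ∑ i ∈ s, τ / (τ + μ i) + (s.card : ℝ)⁻¹ * ∑ i ∈ s, μ i / (τ + μ i) = 1 := by
    rw [← mul_add, ← Finset.sum_add_distrib]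
    have : ∀ i ∈ s, τ / (τ + μ i) + μ i / (τ + μ i) = 1 := fun i hi => by
      rw [← add_div, div_self (hpos i hi).ne']
    rw [Finset.sum_congr rfl this]; simp [hc.ne']
  rw [h, Real.div_rpow (by positivity) hD.le, Real.pow_rpow_inv_natCast hg.le hs.card_pos.ne'] at a2
  rw [Finset.prod_const, Real.div_rpow (by positivity) hD.le,
    Real.pow_rpow_inv_natCast hτ hs.card_pos.ne'] at a1
  have hDr : 0 < D ^ ((s.card : ℝ)⁻¹) := Real.rpow_pos_of_pos hD _
  have h3 : (τ + g) / D ^ ((s.card : ℝ)⁻¹) ≤ 1 := by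
    rw [add_div]; change _ at a1 a2; linarith
  rw [div_le_one hDr] at h3
  calc (τ + g) ^ s.card ≤ (D ^ ((s.card : ℝ)⁻¹)) ^ s.card := by gcongr
    _ = D := Real.rpow_inv_natCast_pow hD.le hs.card_pos.ne'

/-- shift estimate: `p` monic real-rooted of degree `n`, positive coefficients from `m0` on. -/
lemma shift_coeff {p : ℝ[X]} (hp : p.Splits) (hm : p.Monic) {m0 : ℕ} (hm0 : m0 ≤ p.natDegree)
    (h : ∀ m, m0 ≤ m → m ≤ p.natDegree → 0 < p.coeff m) (τ g : ℝ) (hτ : 0 ≤ τ) (hg : 0 < g)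
    (hgp : p.coeff m0 = p.natDegree.choose m0 * g ^ (p.natDegree - m0)) :
    p.natDegree.choose m0 * (τ + g) ^ (p.natDegree - m0) ≤ (p.comp (X + C τ)).coeff m0 := by
  set n := p.natDegree with hn
  set f := derivative^[m0] p with hf
  have hfs : f.Splits := splits_iter hp m0
  have hcoef : ∀ j, f.coeff j = (j + m0).descFactorial m0 • p.coeff (j + m0) :=
    fun j => coeff_iterate_derivative p j
  have hdpos : ∀ j, (0 : ℝ) < ((j + m0).descFactorial m0 : ℝ) := fun j => by
    exact_mod_cast Nat.descFactorial_pos.2 (by omega)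
  have hfpos : ∀ j ≤ n - m0, 0 < f.coeff j := by
    intro j hj
    rw [hcoef, nsmul_eq_mul]
    exact mul_pos (hdpos j) (h _ (by omega) (by omega))
  have hfdeg : f.natDegree = n - m0 := by
    apply le_antisymm (natDegree_iterate_derivative p m0)
    exact le_natDegree_of_ne_zero (hfpos _ le_rfl).ne'
  have hcard : f.roots.card = n - m0 := by rw [← hfs.natDegree_eq_card_roots, hfdeg]
  have hneg : ∀ r ∈ f.roots, r < 0 := by
    intro r hr
    by_contra hr0
    push Not at hr0
    have h1 : f.eval r = 0 := (isRoot_of_mem_roots hr)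
    rw [eval_eq_sum_range, hfdeg, Finset.sum_range_succ'] at h1
    have : 0 ≤ ∑ k ∈ Finset.range (n - m0), f.coeff (k + 1) * r ^ (k + 1) :=
      Finset.sum_nonneg fun i hi => mul_nonneg (hfpos _ (by simp at hi; omega)).le (by positivity)
    have h2 := hfpos 0 (by omega)
    simp at h1
    linarith
  have hlead : f.leadingCoeff = n.descFactorial m0 := by
    rw [leadingCoeff, hfdeg, hcoef, Nat.sub_add_cancel hm0, hm.coeff_natDegree]; simp
  have hev : ∀ x, f.eval x = n.descFactorial m0 * (f.roots.map (fun r => x - r)).prod := by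
    intro x
    conv_lhs => rw [hfs.eq_prod_roots]
    rw [eval_mul, eval_C, hlead, eval_multiset_prod]
    simp [Multiset.map_map, Function.comp_def]
  have hD : (0 : ℝ) < n.descFactorial m0 := by
    exact_mod_cast Nat.descFactorial_pos.2 (by omega)
  have hfac : (n.descFactorial m0 : ℝ) = m0.factorial * n.choose m0 := by
    rw [Nat.descFactorial_eq_factorial_mul_choose]; push_cast; ring
  have hf0 : (m0.factorial : ℝ) ≠ 0 := by exact_mod_cast Nat.factorial_ne_zero m0
  have hprod0 : (f.roots.map (fun r => -r)).prod = g ^ (n - m0) := by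
    have h1 := hev 0
    rw [← coeff_zero_eq_eval_zero, hcoef, zero_add, Nat.descFactorial_self, hgp, nsmul_eq_mul,
      ← mul_assoc, ← hfac] at h1
    have := mul_left_cancel₀ hD.ne' h1
    rw [this]; simp
  -- index the roots
  have hmah : (τ + g) ^ (n - m0) ≤ (f.roots.map (fun r => τ - r)).prod := by
    obtain ⟨l, hl⟩ := Quot.exists_rep f.roots
    have hl' : f.roots = (l : Multiset ℝ) := hl.symm
    rw [hl'] at hprod0 hneg hcard ⊢
    have hlen : l.length = n - m0 := by simpa using hcard
    have conv : ∀ φ : ℝ → ℝ, (Multiset.map φ (l : Multiset ℝ)).prod = ∏ i : Fin l.length, φ (l.get i) := by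
      intro φ
      rw [Multiset.map_coe, Multiset.prod_coe]
      simp
    rw [conv] at hprod0 ⊢
    have := mahler_ineq (Finset.univ : Finset (Fin l.length)) (fun i => -(l.get i))
      (fun i _ => by have := hneg (l.get i) (by simp); linarith) τ g hτ hg
      (by simpa [hlen] using hprod0)
    simpa [hlen, sub_eq_add_neg] using this
  have hcomp : (p.comp (X + C τ)).coeff m0 = f.eval τ / m0.factorial := by
    have : p.comp (X + C τ) = taylor τ p := rfl
    rw [this, taylor_coeff, eq_div_iff hf0, hf, ← factorial_smul_hasseDeriv]
    simp [mul_comm]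
  rw [hcomp, hev, hfac, le_div_iff₀ (by positivity)]
  have hch : (0 : ℝ) ≤ n.choose m0 := Nat.cast_nonneg _
  have := mul_le_mul_of_nonneg_left hmah (mul_nonneg (Nat.cast_nonneg (α := ℝ) m0.factorial) hch)
  linarith

end PolyPart

section MatPart
open Polynomial Matrix

variable {n : ℕ}

def Qp (A : Matrix (Fin n) (Fin n) ℝ) : ℝ[X] := (-A).charpoly

lemma Qp_eval (A : Matrix (Fin n) (Fin n) ℝ) (x : ℝ) :
    (Qp A).eval x = (x • (1 : Matrix (Fin n) (Fin n) ℝ) + A).det := by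
  rw [Qp, Matrix.eval_charpoly]
  congr 1
  rw [sub_neg_eq_add, Matrix.smul_one_eq_diagonal]; rfl

lemma Qp_monic (A : Matrix (Fin n) (Fin n) ℝ) : (Qp A).Monic := charpoly_monic _

lemma Qp_natDegree (A : Matrix (Fin n) (Fin n) ℝ) : (Qp A).natDegree = n := by
  simp [Qp, charpoly_natDegree_eq_dim]

lemma Qp_conj (A R : Matrix (Fin n) (Fin n) ℝ) (h : Rᵀ * R = 1) : Qp (Rᵀ * A * R) = Qp A := by
  apply Polynomial.funext
  intro x
  rw [Qp_eval, Qp_eval]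
  have e : x • (1 : Matrix (Fin n) (Fin n) ℝ) + Rᵀ * A * R
      = Rᵀ * (x • (1 : Matrix (Fin n) (Fin n) ℝ) + A) * R := by
    rw [Matrix.mul_add, Matrix.add_mul, Matrix.mul_smul, Matrix.smul_mul, Matrix.mul_one, h]
  have hd : R.det * R.det = 1 := by
    have := congrArg Matrix.det h
    simpa using this
  rw [e, det_mul, det_mul, det_transpose]
  linear_combination (x • (1 : Matrix (Fin n) (Fin n) ℝ) + A).det * hd

lemma Qp_shift (A : Matrix (Fin n) (Fin n) ℝ) (τ : ℝ) :
    Qp (A + τ • (1 : Matrix (Fin n) (Fin n) ℝ)) = (Qp A).comp (X + C τ) := by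
  apply Polynomial.funext
  intro x
  rw [eval_comp, Qp_eval, Qp_eval]
  congr 1
  simp only [eval_add, eval_X, eval_C, add_smul]
  abel

lemma Qp_scale (A : Matrix (Fin n) (Fin n) ℝ) (r : ℝ) (hr : r ≠ 0) (m : ℕ) (hm : m ≤ n) :
    (Qp (r • A)).coeff m = r ^ (n - m) * (Qp A).coeff m := by
  have h : (Qp (r • A)).comp (C r * X) = C (r ^ n) * Qp A := by
    apply Polynomial.funext
    intro x
    rw [eval_comp, Qp_eval, eval_mul, eval_mul, eval_C, eval_C, Qp_eval]
    have : r ^ n = r ^ Fintype.card (Fin n) := by simp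
    rw [this, ← det_smul]
    congr 1
    simp [smul_smul]
  have h2 := congrArg (fun p => p.coeff m) h
  simp only [comp_C_mul_X_coeff, coeff_C_mul] at h2
  have e : r ^ n = r ^ (n - m) * r ^ m := by rw [← pow_add]; congr 1; omega
  have hrm : r ^ m ≠ 0 := pow_ne_zero _ hr
  rw [e] at h2
  apply mul_right_cancel₀ hrm
  linarith

lemma Qp_diag (d : Fin n → ℝ) : Qp (diagonal d) = ∏ i, (X + C (d i)) := by
  apply Polynomial.funext
  intro x
  rw [Qp_eval, eval_prod, Matrix.smul_one_eq_diagonal, diagonal_add, det_diagonal]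
  simp

lemma Qp_scalar (κ : ℝ) : Qp (κ • (1 : Matrix (Fin n) (Fin n) ℝ)) = (X + C κ) ^ n := by
  rw [Matrix.smul_one_eq_diagonal, Qp_diag]
  simp

lemma herm_decomp {A : Matrix (Fin n) (Fin n) ℝ} (h : A.IsHermitian) :
    ∃ R : Matrix (Fin n) (Fin n) ℝ, Rᵀ * R = 1 ∧ R * Rᵀ = 1 ∧ A = Rᵀ * diagonal h.eigenvalues * R := by
  refine ⟨star (h.eigenvectorUnitary : Matrix (Fin n) (Fin n) ℝ), ?_, ?_, ?_⟩
  · have := Unitary.coe_mul_star_self h.eigenvectorUnitary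
    simpa [star_eq_conjTranspose] using this
  · have := Unitary.coe_star_mul_self h.eigenvectorUnitary
    simpa [star_eq_conjTranspose] using this
  · have := h.spectral_theorem
    rw [Unitary.conjStarAlgAut_apply] at this
    simpa [star_eq_conjTranspose, Function.comp_def] using this

lemma Qp_herm {A : Matrix (Fin n) (Fin n) ℝ} (h : A.IsHermitian) :
    Qp A = ∏ i, (X + C (h.eigenvalues i)) := by
  obtain ⟨R, h1, -, h3⟩ := herm_decomp h
  conv_lhs => rw [h3]
  rw [Qp_conj _ _ h1, Qp_diag]

lemma splits_prodX (s : Finset (Fin n)) (d : Fin n → ℝ) : (∏ i ∈ s, (X + C (d i))).Splits :=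
  Splits.prod fun i _ => Splits.X_add_C _

lemma Qp_splits {A : Matrix (Fin n) (Fin n) ℝ} (h : A.IsHermitian) : (Qp A).Splits := by
  rw [Qp_herm h]; exact splits_prodX _ _

lemma esymm_coeff {A : Matrix (Fin n) (Fin n) ℝ} (h : A.IsHermitian) (j : ℕ) (hj : j ≤ n) :
    esymmVec j h.eigenvalues = (Qp A).coeff (n - j) := by
  rw [Qp_herm h, Finset.prod_X_add_C_coeff _ _ (by simp)]
  simp only [esymmVec, Finset.card_univ, Fintype.card_fin]
  rw [Nat.sub_sub_self hj]

/-- cone -/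
def GC (m0 : ℕ) (A : Matrix (Fin n) (Fin n) ℝ) : Prop :=
  A.IsHermitian ∧ ∀ m, m0 ≤ m → m ≤ n → 0 < (Qp A).coeff m

lemma coeff_top (A : Matrix (Fin n) (Fin n) ℝ) : (Qp A).coeff n = 1 := by
  have := (Qp_monic A).coeff_natDegree
  rwa [Qp_natDegree] at this

lemma garding_GC {k : ℕ} (hkn : k ≤ n) {A : Matrix (Fin n) (Fin n) ℝ} (h : InGardingCone k A) :
    GC (n - k) A := by
  obtain ⟨hA, hp⟩ := h
  refine ⟨hA, fun m h1 h2 => ?_⟩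
  rcases eq_or_lt_of_le h2 with rfl | h3
  · rw [coeff_top]; norm_num
  · have := hp (n - m) (by omega) (by omega)
    rw [esymm_coeff hA _ (by omega)] at this
    rwa [show n - (n - m) = m by omega] at this

lemma sigma_coeff {k : ℕ} (hkn : k ≤ n) {A : Matrix (Fin n) (Fin n) ℝ} (h : A.IsHermitian) :
    sigmaMat k A = (Qp A).coeff (n - k) := by
  rw [← esymm_coeff h k hkn, sigmaMat]
  exact dif_pos h

lemma trace_coeff (hn : 1 ≤ n) {A : Matrix (Fin n) (Fin n) ℝ} (h : A.IsHermitian) :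
    A.trace = (Qp A).coeff (n - 1) := by
  rw [← esymm_coeff h 1 hn, h.trace_eq_sum_eigenvalues, esymmVec, Finset.powersetCard_one]
  simp

lemma cont_coeff (m : ℕ) : Continuous fun A : Matrix (Fin n) (Fin n) ℝ => (Qp A).coeff m := by
  have h : ∀ A : Matrix (Fin n) (Fin n) ℝ, (Qp A).coeff m =
      MvPolynomial.eval (fun ij : Fin n × Fin n => (-A) ij.1 ij.2) ((charpoly.univ ℝ (Fin n)).coeff m) := by
    intro A
    have := charpoly.univ_coeff_eval₂Hom (n := Fin n) (RingHom.id ℝ) (fun ij : Fin n × Fin n => (-A) ij.1 ij.2) m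
    rw [Qp]
    exact this.symm
  simp_rw [h]
  apply MvPolynomial.continuous_eval _ |>.comp
  fun_prop

lemma det_rank_one (d c : Fin n → ℝ) :
    (diagonal d + vecMulVec c c).det = ∏ i, d i + ∑ i, c i ^ 2 * ∏ j ∈ Finset.univ.erase i, d j := by
  -- polynomial argument in a shift
  have key : Qp (diagonal d + vecMulVec c c) =
      ∏ i, (X + C (d i)) + ∑ i, C (c i ^ 2) * ∏ j ∈ Finset.univ.erase i, (X + C (d j)) := by
    apply Polynomial.eq_of_infinite_eval_eq
    have hfin : (Set.range fun i => - d i).Finite := Set.finite_range _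
    refine hfin.infinite_compl.mono ?_
    intro x hx
    have hx' : ∀ i, x + d i ≠ 0 := by
      intro i hi
      exact hx ⟨i, by simp; linarith⟩
    simp only [Set.mem_ofPred_eq, Qp_eval, eval_add, eval_prod, eval_finsetSum, eval_mul, eval_X, eval_C]
    rw [← add_assoc, Matrix.smul_one_eq_diagonal, diagonal_add]
    have hdet : (diagonal fun i => x + d i).det = ∏ i, (x + d i) := det_diagonal
    have hu : IsUnit (diagonal fun i => x + d i).det := by
      rw [hdet, isUnit_iff_ne_zero]; exact Finset.prod_ne_zero_iff.2 fun i _ => hx' i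
    rw [vecMulVec_eq Unit, det_add_replicateCol_mul_replicateRow hu, hdet, det_unique]
    have hinv : (diagonal fun i => x + d i)⁻¹ = diagonal fun i => (x + d i)⁻¹ := by
      apply Matrix.inv_eq_left_inv
      rw [diagonal_mul_diagonal]
      simp [hx']
    rw [hinv]
    have : ((1 : Matrix Unit Unit ℝ) + replicateRow Unit c * (diagonal fun i => (x + d i)⁻¹) * replicateCol Unit c) default default
       = 1 + ∑ i, c i ^ 2 * (x + d i)⁻¹ := by
      simp only [Matrix.add_apply, one_apply_eq, Matrix.mul_apply]
      congr 1
      apply Finset.sum_congr rfl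
      intro i _
      simp [Matrix.diagonal_apply]; ring
    rw [this, mul_add, mul_one, Finset.mul_sum]
    congr 1
    apply Finset.sum_congr rfl
    intro i _
    rw [← Finset.mul_prod_erase Finset.univ _ (Finset.mem_univ i)]
    field_simp [hx' i]
  have := congrArg (fun p => p.eval 0) key
  simpa [Qp_eval, eval_prod, eval_finsetSum] using this

lemma Qp_rank_one (d c : Fin n → ℝ) : Qp (diagonal d + vecMulVec c c) =
      ∏ i, (X + C (d i)) + ∑ i, C (c i ^ 2) * ∏ j ∈ Finset.univ.erase i, (X + C (d j)) := by
  apply Polynomial.funext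
  intro x
  rw [Qp_eval, ← add_assoc, Matrix.smul_one_eq_diagonal, diagonal_add, det_rank_one]
  simp [eval_prod, eval_finsetSum]

lemma mono_rank_one {m0 : ℕ} {A : Matrix (Fin n) (Fin n) ℝ} (hA : GC m0 A) (v : Fin n → ℝ) :
    GC m0 (A + vecMulVec v v) ∧ ∀ m, m0 ≤ m → m ≤ n → (Qp A).coeff m ≤ (Qp (A + vecMulVec v v)).coeff m := by
  obtain ⟨hH, hpos⟩ := hA
  obtain ⟨R, h1, h2, h3⟩ := herm_decomp hH
  set d := hH.eigenvalues
  set c := R *ᵥ v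
  have hv : vecMulVec v v = Rᵀ * vecMulVec c c * R := by
    have : v = Rᵀ *ᵥ c := by simp [c, Matrix.mulVec_mulVec, h1]
    conv_lhs => rw [this]
    rw [Matrix.mul_vecMulVec, Matrix.vecMulVec_mul, Matrix.mulVec_transpose]
  have e : Qp (A + vecMulVec v v) = Qp (diagonal d + vecMulVec c c) := by
    conv_lhs => rw [h3, hv]
    rw [← Matrix.add_mul, ← Matrix.mul_add, Qp_conj _ _ h1]
  have hle : ∀ m, m0 ≤ m → m ≤ n → (Qp A).coeff m ≤ (Qp (A + vecMulVec v v)).coeff m := by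
    intro m hm0 hmn
    rw [e, Qp_rank_one, coeff_add, Qp_herm hH, finsetSum_coeff]
    apply le_add_of_nonneg_right
    apply Finset.sum_nonneg
    intro i _
    rw [coeff_C_mul]
    apply mul_nonneg (sq_nonneg _)
    set q := ∏ j ∈ Finset.univ.erase i, (X + C (d j)) with hq
    have hqm : q.Monic := monic_prod_of_monic _ _ fun j _ => monic_X_add_C _
    have hqd : q.natDegree + 1 = n := by
      rw [hq, natDegree_prod_of_monic _ _ fun j _ => monic_X_add_C _]
      simp
      have := i.pos
      omega
    have hfac : (X + C (d i)) * q = Qp A := by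
      rw [Qp_herm hH, hq]
      exact Finset.mul_prod_erase Finset.univ (fun j => X + C (d j)) (Finset.mem_univ i)
    rcases eq_or_lt_of_le hmn with rfl | hlt
    · rw [coeff_eq_zero_of_natDegree_lt (by omega)]
    · have hqs : q.Splits := splits_prodX _ _
      exact (sign_coeff hqs hqm (d i) (m0 := m0)
        (fun m a b => by rw [hfac]; exact hpos m a (by omega)) (q.natDegree - m) m (by omega) hm0).le
  refine ⟨⟨?_, fun m a b => (hpos m a b).trans_le (hle m a b)⟩, hle⟩
  apply hH.add
  rw [Matrix.IsHermitian]
  ext i j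
  simp [vecMulVec_apply, mul_comm]

lemma mono_psd {m0 : ℕ} {A P : Matrix (Fin n) (Fin n) ℝ} (hA : GC m0 A) (hP : P.PosSemidef) :
    GC m0 (A + P) ∧ ∀ m, m0 ≤ m → m ≤ n → (Qp A).coeff m ≤ (Qp (A + P)).coeff m := by
  obtain ⟨N, v, rfl⟩ := Matrix.posSemidef_iff_eq_sum_vecMulVec.1 hP
  have : ∀ s : Finset (Fin N), GC m0 (A + ∑ i ∈ s, vecMulVec (v i) (star (v i))) ∧
     ∀ m, m0 ≤ m → m ≤ n → (Qp A).coeff m ≤ (Qp (A + ∑ i ∈ s, vecMulVec (v i) (star (v i)))).coeff m := by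
    intro s
    induction s using Finset.induction_on with
    | empty => simpa using hA
    | insert a s ha ih =>
      obtain ⟨i1, i2⟩ := ih
      have := mono_rank_one i1 (v a)
      rw [Finset.sum_insert ha, add_comm (vecMulVec _ _), ← add_assoc]
      simp only [star_trivial] at *
      exact ⟨this.1, fun m a b => (i2 m a b).trans (this.2 m a b)⟩
  exact this _

lemma mono_le {m0 : ℕ} {A B : Matrix (Fin n) (Fin n) ℝ} (hA : GC m0 A) (hP : (B - A).PosSemidef) :
    ∀ m, m0 ≤ m → m ≤ n → (Qp A).coeff m ≤ (Qp B).coeff m := by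
  have := (mono_psd hA hP).2
  simpa using this

lemma scalar_coeff (κ : ℝ) (m : ℕ) :
    (Qp (κ • (1 : Matrix (Fin n) (Fin n) ℝ))).coeff m = κ ^ (n - m) * n.choose m := by
  rw [Qp_scalar, coeff_X_add_C_pow]

lemma scalar_herm (κ : ℝ) : (κ • (1 : Matrix (Fin n) (Fin n) ℝ)).IsHermitian := by
  rw [Matrix.IsHermitian]; simp

lemma scalar_GC (m0 : ℕ) {κ : ℝ} (hκ : 0 < κ) : GC m0 (κ • (1 : Matrix (Fin n) (Fin n) ℝ)) := by
  refine ⟨scalar_herm κ, fun m _ h => ?_⟩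
  rw [scalar_coeff]
  have : (0 : ℝ) < n.choose m := by exact_mod_cast Nat.choose_pos h
  positivity

lemma scale_GC {m0 : ℕ} {A : Matrix (Fin n) (Fin n) ℝ} (hA : GC m0 A) {r : ℝ} (hr : 0 < r) :
    GC m0 (r • A) := by
  refine ⟨?_, fun m a b => ?_⟩
  · have := hA.1
    rw [Matrix.IsHermitian] at *
    rw [conjTranspose_smul, this]; simp
  · rw [Qp_scale _ _ hr.ne' _ b]
    have := hA.2 m a b
    positivity

lemma conj_GC {m0 : ℕ} {A R : Matrix (Fin n) (Fin n) ℝ} (h : Rᵀ * R = 1) (hA : GC m0 A) :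
    GC m0 (Rᵀ * A * R) := by
  refine ⟨?_, by rw [Qp_conj _ _ h]; exact hA.2⟩
  have := isHermitian_conjTranspose_mul_mul R hA.1
  simpa using this

/-- strict concavity-type estimate -/
lemma combo {k : ℕ} (hk : 1 ≤ k) (hkn : k ≤ n) {A : Matrix (Fin n) (Fin n) ℝ} (hA : GC (n - k) A)
    (h1 : (Qp A).coeff (n - k) = 1) {g κ t : ℝ} (hg : 0 < g) (hgk : n.choose k * g ^ k = 1)
    (hκ : g < κ) (ht : 0 < t) (ht1 : t < 1) :
    GC (n - k) ((1 - t) • A + (t * κ) • (1 : Matrix (Fin n) (Fin n) ℝ)) ∧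
    1 < (Qp ((1 - t) • A + (t * κ) • (1 : Matrix (Fin n) (Fin n) ℝ))).coeff (n - k) := by
  have hs : 0 < 1 - t := by linarith
  set τ := t * κ / (1 - t) with hτ
  have hτm : (1 - t) * τ = t * κ := by rw [hτ]; field_simp
  have hτ0 : 0 < τ := by have := hg.trans hκ; positivity
  have e : (1 - t) • A + (t * κ) • (1 : Matrix (Fin n) (Fin n) ℝ) =
      (1 - t) • (A + τ • (1 : Matrix (Fin n) (Fin n) ℝ)) := by
    rw [smul_add, smul_smul]; rw [hτm]
  have hpsd : (τ • (1 : Matrix (Fin n) (Fin n) ℝ)).PosSemidef :=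
    PosSemidef.smul PosSemidef.one hτ0.le
  have hG := mono_psd hA hpsd
  rw [e]
  refine ⟨scale_GC hG.1 hs, ?_⟩
  rw [Qp_scale _ _ hs.ne' _ (by omega), Qp_shift]
  have hd := Qp_natDegree A
  have := shift_coeff (Qp_splits hA.1) (Qp_monic A) (m0 := n - k) (by rw [hd]; omega)
    (fun m a b => hA.2 m a (by omega)) τ g hτ0.le hg
    (by rw [hd, h1, Nat.choose_symm hkn, Nat.sub_sub_self hkn, hgk])
  rw [hd, Nat.choose_symm hkn, Nat.sub_sub_self hkn] at this
  rw [Nat.sub_sub_self hkn]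
  have hc : (0 : ℝ) < n.choose k := by exact_mod_cast Nat.choose_pos hkn
  calc (1 : ℝ) = n.choose k * g ^ k := hgk.symm
    _ < n.choose k * ((1 - t) * (τ + g)) ^ k := by
      apply mul_lt_mul_of_pos_left _ hc
      apply pow_lt_pow_left₀ _ hg.le (by omega)
      have : (1 - t) * (τ + g) = t * κ + (1 - t) * g := by rw [mul_add, hτm]
      rw [this]; nlinarith
    _ = (1 - t) ^ k * (n.choose k * (τ + g) ^ k) := by rw [mul_pow]; ring
    _ ≤ _ := by gcongr

end MatPart

section HessPart
open Matrix

variable {n : ℕ}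

abbrev Bil (n : ℕ) := Euc n →L[ℝ] Euc n →L[ℝ] ℝ

def bmat (B : Bil n) : Matrix (Fin n) (Fin n) ℝ :=
  fun i j => B (EuclideanSpace.single i (1:ℝ)) (EuclideanSpace.single j (1:ℝ))

def innB (n : ℕ) : Bil n :=
  LinearMap.mkContinuous₂ (innerₗ (Euc n)) 1 (fun x y => by
    simpa using norm_inner_le_norm (𝕜 := ℝ) x y)

lemma innB_apply (x y : Euc n) : innB n x y = ⟪x, y⟫ := rfl

lemma bmat_add (B C : Bil n) : bmat (B + C) = bmat B + bmat C := rfl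
lemma bmat_sub (B C : Bil n) : bmat (B - C) = bmat B - bmat C := rfl
lemma bmat_smul (r : ℝ) (B : Bil n) : bmat (r • B) = r • bmat B := rfl
lemma single_inner (i j : Fin n) : ⟪(EuclideanSpace.single i (1:ℝ) : Euc n),
    EuclideanSpace.single j (1:ℝ)⟫ = (1 : Matrix (Fin n) (Fin n) ℝ) i j := by
  rw [EuclideanSpace.inner_single_left]
  simp [Matrix.one_apply, Pi.single_apply]

lemma bmat_inn : bmat (innB n) = 1 := by
  ext i j
  exact single_inner i j

lemma euc_sum (x : Euc n) : x = ∑ i, x i • EuclideanSpace.single i (1:ℝ) := by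
  ext j
  simp [Finset.sum_apply, Pi.single_apply]

lemma bmat_form (B : Bil n) (x y : Euc n) : B x y = ∑ i, ∑ j, x i * y j * bmat B i j := by
  conv_lhs => rw [euc_sum x, euc_sum y]
  simp only [map_sum, map_smul, _root_.sum_apply, _root_.smul_apply,
    smul_eq_mul, Finset.mul_sum]
  rw [Finset.sum_comm]
  apply Finset.sum_congr rfl
  intro i _
  apply Finset.sum_congr rfl
  intro j _
  rw [bmat]; ring

lemma bmat_psd {B : Bil n} (hH : (bmat B).IsHermitian) (h : ∀ v, 0 ≤ B v v) : (bmat B).PosSemidef := by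
  refine PosSemidef.of_dotProduct_mulVec_nonneg hH fun x => ?_
  have := h (WithLp.toLp 2 x)
  rw [bmat_form] at this
  refine this.trans (le_of_eq ?_)
  simp only [dotProduct, mulVec, star_trivial, Finset.mul_sum]
  apply Finset.sum_congr rfl
  intro i _
  apply Finset.sum_congr rfl
  intro j _
  ring

def rmat (R : Euc n →ₗᵢ[ℝ] Euc n) : Matrix (Fin n) (Fin n) ℝ :=
  fun i j => (R (EuclideanSpace.single j (1:ℝ))) i

lemma rmat_orth (R : Euc n →ₗᵢ[ℝ] Euc n) : (rmat R)ᵀ * rmat R = 1 := by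
  ext i j
  have h := R.inner_map_map (EuclideanSpace.single i (1:ℝ)) (EuclideanSpace.single j (1:ℝ))
  rw [PiLp.inner_apply] at h
  simp only [Matrix.mul_apply, transpose_apply, rmat]
  simp only [RCLike.inner_apply, conj_trivial] at h
  rw [show (∑ x, (R (EuclideanSpace.single i 1)) x * (R (EuclideanSpace.single j 1)) x)
    = ∑ x, (R (EuclideanSpace.single j 1)) x * (R (EuclideanSpace.single i 1)) x from
    Finset.sum_congr rfl fun _ _ => mul_comm _ _, h]
  exact single_inner i j

def bcomp (B : Bil n) (R : Euc n →ₗᵢ[ℝ] Euc n) : Bil n :=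
  B.bilinearComp R.toContinuousLinearMap R.toContinuousLinearMap

lemma bcomp_apply (B : Bil n) (R : Euc n →ₗᵢ[ℝ] Euc n) (x y) : bcomp B R x y = B (R x) (R y) := rfl

lemma bmat_bcomp (B : Bil n) (R : Euc n →ₗᵢ[ℝ] Euc n) :
    bmat (bcomp B R) = (rmat R)ᵀ * bmat B * rmat R := by
  ext i j
  change B (R _) (R _) = _
  rw [bmat_form]
  simp only [Matrix.mul_apply, transpose_apply, rmat, Finset.sum_mul]
  rw [Finset.sum_comm]
  apply Finset.sum_congr rfl
  intro a _
  apply Finset.sum_congr rfl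
  intro b _
  ring

def HasHess (f : Euc n → ℝ) (x : Euc n) (B : Bil n) : Prop :=
  ∃ f' : Euc n → (Euc n →L[ℝ] ℝ), (∀ᶠ y in 𝓝 x, HasFDerivAt f (f' y) y) ∧ HasFDerivAt f' B x

lemma HasHess.add {f g : Euc n → ℝ} {x} {B C : Bil n} (hf : HasHess f x B) (hg : HasHess g x C) :
    HasHess (fun y => f y + g y) x (B + C) := by
  obtain ⟨f', h1, h2⟩ := hf
  obtain ⟨g', h3, h4⟩ := hg
  refine ⟨fun y => f' y + g' y, ?_, h2.add h4⟩
  filter_upwards [h1, h3] with y a b using a.add b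

lemma HasHess.sub {f g : Euc n → ℝ} {x} {B C : Bil n} (hf : HasHess f x B) (hg : HasHess g x C) :
    HasHess (fun y => f y - g y) x (B - C) := by
  obtain ⟨f', h1, h2⟩ := hf
  obtain ⟨g', h3, h4⟩ := hg
  refine ⟨fun y => f' y - g' y, ?_, h2.sub h4⟩
  filter_upwards [h1, h3] with y a b using a.sub b

lemma HasHess.add_const {f : Euc n → ℝ} {x} {B : Bil n} (hf : HasHess f x B) (c : ℝ) :
    HasHess (fun y => f y + c) x B := by
  obtain ⟨f', h1, h2⟩ := hf
  refine ⟨f', ?_, h2⟩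
  filter_upwards [h1] with y a using a.add_const c

lemma HasHess.mul {f : Euc n → ℝ} {x} {B : Bil n} (hf : HasHess f x B) (c : ℝ) :
    HasHess (fun y => c * f y) x (c • B) := by
  obtain ⟨f', h1, h2⟩ := hf
  refine ⟨fun y => c • f' y, ?_, h2.const_smul c⟩
  filter_upwards [h1] with y a using a.const_mul c

lemma HasHess.zero (c : ℝ) (x : Euc n) : HasHess (fun _ => c) x 0 :=
  ⟨fun _ => 0, Eventually.of_forall fun y => hasFDerivAt_const c y, hasFDerivAt_const _ _⟩

lemma HasHess.quad (κ c : ℝ) (x : Euc n) :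
    HasHess (fun y => κ / 2 * (‖y‖ ^ 2 - c)) x (κ • innB n) := by
  refine ⟨fun y => (κ • innB n) y, Eventually.of_forall fun y => ?_, ContinuousLinearMap.hasFDerivAt _⟩
  have := ((hasStrictFDerivAt_norm_sq y).hasFDerivAt.sub_const c).const_mul (κ / 2)
  refine this.congr_fderiv ?_
  ext z
  change κ / 2 * (2 • (⟪y, z⟫ : ℝ)) = κ * ⟪y, z⟫
  simp
  ring

lemma HasHess.comp {f : Euc n → ℝ} {x} {B : Bil n} (R : Euc n →ₗᵢ[ℝ] Euc n)
    (hf : HasHess f (R x) B) : HasHess (fun y => f (R y)) x (bcomp B R) := by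
  obtain ⟨f', h1, h2⟩ := hf
  refine ⟨fun y => (f' (R y)).comp R.toContinuousLinearMap, ?_, ?_⟩
  · have : Tendsto R (𝓝 x) (𝓝 (R x)) := R.continuous.continuousAt
    filter_upwards [this.eventually h1] with y hy
    exact hy.comp y R.toContinuousLinearMap.hasFDerivAt
  · have h3 : HasFDerivAt (fun y => f' (R y)) (B.comp R.toContinuousLinearMap) x :=
      HasFDerivAt.comp x h2 R.toContinuousLinearMap.hasFDerivAt
    have h4 := h3.clm_comp (hasFDerivAt_const R.toContinuousLinearMap x)
    refine h4.congr_fderiv ?_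
    ext v w
    simp [bcomp]

lemma HasHess.min {f : Euc n → ℝ} {x} {B : Bil n} (hf : HasHess f x B) (hm : IsLocalMin f x)
    (v : Euc n) : 0 ≤ B v v := by
  by_contra hneg
  push Not at hneg
  obtain ⟨f', h1, h2⟩ := hf
  set l : ℝ → Euc n := fun t => x + t • v
  have hl : ∀ t, HasDerivAt l v t := fun t => by
    have := ((hasDerivAt_id t).smul_const v).const_add x
    rw [one_smul] at this
    exact this
  have hl0 : l 0 = x := by simp [l]
  have hlc : Tendsto l (𝓝 0) (𝓝 x) := by
    have := (hl 0).continuousAt.tendsto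
    rwa [hl0] at this
  have hd : ∀ᶠ t in 𝓝 (0:ℝ), HasDerivAt (f ∘ l) (f' (l t) v) t := by
    filter_upwards [hlc.eventually h1] with t ht
    exact ht.comp_hasDerivAt t (hl t)
  have hdd : deriv (f ∘ l) =ᶠ[𝓝 0] fun t => f' (l t) v := by
    filter_upwards [hd] with t ht using ht.deriv
  have h3 : HasDerivAt (fun t => f' (l t) v) (B v v) 0 := by
    have h2' : HasFDerivAt f' B (l 0) := by rwa [hl0]
    have := h2'.comp_hasDerivAt (0:ℝ) (hl 0)
    have h := this.clm_apply (hasDerivAt_const (0:ℝ) v)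
    simpa using h
  have h4 : deriv (deriv (f ∘ l)) 0 = B v v := by
    rw [hdd.deriv_eq, h3.deriv]
  have hmin : IsLocalMin (f ∘ l) 0 := by
    have : ∀ᶠ t in 𝓝 (0:ℝ), f x ≤ f (l t) := hlc.eventually hm
    filter_upwards [this] with t ht
    simpa [hl0] using ht
  have hmax : IsLocalMax (f ∘ l) 0 :=
    isLocalMax_of_deriv_deriv_neg (by rw [h4]; exact hneg) hmin.deriv_eq_zero
      hd.self_of_nhds.continuousAt
  have hconst : f ∘ l =ᶠ[𝓝 0] fun _ => (f ∘ l) 0 := by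
    filter_upwards [hmin, hmax] with t a b using le_antisymm b a
  have h5 : deriv (f ∘ l) =ᶠ[𝓝 0] fun _ => 0 := by
    have := hconst.deriv
    refine this.trans (Eventually.of_forall fun t => by simp)
  have h6 : deriv (deriv (f ∘ l)) 0 = 0 := by rw [h5.deriv_eq]; simp
  linarith

lemma psd_of_min {f g : Euc n → ℝ} {x} {B C : Bil n} (hf : HasHess f x B) (hg : HasHess g x C)
    (hB : (bmat B).IsHermitian) (hC : (bmat C).IsHermitian)
    (hm : IsLocalMin (fun y => f y - g y) x) : (bmat B - bmat C).PosSemidef := by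
  rw [← bmat_sub]
  exact bmat_psd (by rw [bmat_sub]; exact hB.sub hC) fun v => (hf.sub hg).min hm v

lemma int_hess {f : Euc n → ℝ} {s : Set (Euc n)} {x : Euc n} (hf : ContDiffOn ℝ 2 f s)
    (hs : s ∈ 𝓝 x) : ∃ B, HasHess f x B ∧ hessianWithin f s x = bmat B := by
  have hfx : ContDiffAt ℝ 2 f x := hf.contDiffAt hs
  refine ⟨fderiv ℝ (fderiv ℝ f) x, ⟨fderiv ℝ f, ?_, ?_⟩, ?_⟩
  · have h1 : ∀ᶠ y in 𝓝 x, ContDiffAt ℝ 2 f y := hfx.eventually (by simp)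
    filter_upwards [h1] with y hy
    exact (hy.differentiableAt (by norm_num)).hasFDerivAt
  · have h2 : ContDiffAt ℝ 1 (fderiv ℝ f) x := hfx.fderiv_right (by norm_num)
    exact (h2.differentiableAt (by norm_num)).hasFDerivAt
  · have h1 : iteratedFDerivWithin ℝ 2 f s x = iteratedFDeriv ℝ 2 f x := by
      rw [← iteratedFDerivWithin_univ]
      exact iteratedFDerivWithin_congr_set (by simpa [eventuallyEq_univ] using hs) 2
    funext i j
    unfold hessianWithin
    rw [h1, iteratedFDeriv_two_apply]
    rfl

lemma min_principle {K : Set (Euc n)} (hK : IsCompact K) {h : Euc n → ℝ} (hc : ContinuousOn h K)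
    (hb : ∀ x ∈ K, 0 ≤ h x ∨ (K ∈ 𝓝 x ∧ ¬ IsLocalMin h x)) : ∀ x ∈ K, 0 ≤ h x := by
  intro x hx
  obtain ⟨y, hy, hmin⟩ := hK.exists_isMinOn ⟨x, hx⟩ hc
  rcases hb y hy with h1 | ⟨h1, h2⟩
  · exact h1.trans (hmin hx)
  · exact absurd (hmin.isLocalMin h1) h2

end HessPart

section GeoPart
variable {n : ℕ}

lemma near_scale {Ω₁ : Set (Euc n)} {ε₀ ε : ℝ} (hball : closedBall (0 : Euc n) ε₀ ⊆ Ω₁)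
    (hε : 0 < ε) (hεε : ε < ε₀) {p : Euc n} (hp : ‖p‖ = ε) {r : ℝ} (hr : 0 ≤ r) (hr1 : r ≤ ε₀ / ε - 1) :
    (1 + r) • p ∈ Ω₁ := by
  apply hball
  rw [mem_closedBall_zero_iff, norm_smul, hp, Real.norm_of_nonneg (by linarith)]
  have : 1 + r ≤ ε₀ / ε := by linarith
  calc (1 + r) * ε ≤ ε₀ / ε * ε := by gcongr
    _ = ε₀ := by field_simp

lemma scale_norm {ε : ℝ} {p : Euc n} (hp : ‖p‖ = ε) {r : ℝ} (hr : 0 ≤ r) :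
    ‖(1 + r) • p‖ = (1 + r) * ε := by
  rw [norm_smul, hp, Real.norm_of_nonneg (by linarith)]

lemma tendsto_scale (p : Euc n) : Tendsto (fun r : ℝ => (1 + r) • p) (𝓝[>] 0) (𝓝 p) := by
  have : Continuous (fun r : ℝ => (1 + r) • p) := by fun_prop
  have h := this.tendsto 0
  simp only [add_zero, one_smul] at h
  exact h.mono_left nhdsWithin_le_nhds

lemma scale_mem {Ω₁ : Set (Euc n)} {ε₀ ε : ℝ} (hball : closedBall (0 : Euc n) ε₀ ⊆ Ω₁)
    (hε : 0 < ε) (hεε : ε < ε₀) {p : Euc n} (hp : ‖p‖ = ε) :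
    ∀ᶠ r in 𝓝[>] (0:ℝ), (1 + r) • p ∈ Ω₁ \ closedBall (0 : Euc n) ε := by
  have h1 : 0 < ε₀ / ε - 1 := by
    rw [sub_pos, lt_div_iff₀ hε]; linarith
  filter_upwards [Ioc_mem_nhdsGT h1] with r hr
  refine ⟨near_scale hball hε hεε hp hr.1.le hr.2, ?_⟩
  rw [mem_closedBall_zero_iff, scale_norm hp hr.1.le]
  nlinarith [hr.1]

lemma ring_eq {Ω₁ : Set (Euc n)} {ε₀ ε : ℝ} (hball : closedBall (0 : Euc n) ε₀ ⊆ Ω₁)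
    (hε : 0 < ε) (hεε : ε < ε₀) :
    ringSet Ω₁ 0 ε = closure Ω₁ ∩ {x | ε ≤ ‖x‖} := by
  apply Subset.antisymm
  · apply closure_minimal
    · rintro x ⟨h1, h2⟩
      rw [mem_closedBall_zero_iff, not_le] at h2
      exact ⟨subset_closure h1, h2.le⟩
    · exact isClosed_closure.inter (isClosed_le continuous_const continuous_norm)
  · rintro x ⟨h1, h2⟩
    rcases (show ε ≤ ‖x‖ from h2).eq_or_lt with h | h
    · exact mem_closure_of_tendsto (tendsto_scale x) (scale_mem hball hε hεε h.symm)
    · have ho : IsOpen (closedBall (0 : Euc n) ε)ᶜ := isClosed_closedBall.isOpen_compl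
      have := ho.inter_closure (t := Ω₁) ⟨by simpa using h, h1⟩
      refine closure_mono ?_ this
      rintro y ⟨a, b⟩
      exact ⟨b, a⟩

lemma ring_cases {Ω₁ : Set (Euc n)} (hΩo : IsOpen Ω₁) {ε₀ ε : ℝ} (hball : closedBall (0 : Euc n) ε₀ ⊆ Ω₁)
    (hε : 0 < ε) (hεε : ε < ε₀) {x : Euc n} (hx : x ∈ ringSet Ω₁ 0 ε) :
    ‖x‖ = ε ∨ x ∈ frontier Ω₁ ∨ x ∈ Ω₁ \ closedBall (0 : Euc n) ε := by
  rw [ring_eq hball hε hεε] at hx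
  rcases (show ε ≤ ‖x‖ from hx.2).eq_or_lt with h | h
  · exact Or.inl h.symm
  · by_cases hx1 : x ∈ Ω₁
    · right; right; exact ⟨hx1, by simpa using h⟩
    · right; left; rw [hΩo.frontier_eq]; exact ⟨hx.1, hx1⟩

lemma ring_nhds {Ω₁ : Set (Euc n)} (hΩo : IsOpen Ω₁) {ε : ℝ} {x : Euc n}
    (hx : x ∈ Ω₁ \ closedBall (0 : Euc n) ε) : ringSet Ω₁ 0 ε ∈ 𝓝 x :=
  mem_of_superset ((hΩo.sdiff isClosed_closedBall).mem_nhds hx) subset_closure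

lemma ring_unique {Ω₁ : Set (Euc n)} (hΩo : IsOpen Ω₁) (hc : Convex ℝ Ω₁) {ε₀ ε : ℝ}
    (hball : closedBall (0 : Euc n) ε₀ ⊆ Ω₁)
    (hε : 0 < ε) (hεε : ε < ε₀) : UniqueDiffOn ℝ (ringSet Ω₁ 0 ε) := by
  intro x hx
  have hx' := hx
  rw [ring_eq hball hε hεε] at hx'
  have h0 : (0 : Euc n) ∈ Ω₁ := hball (by simp; linarith)
  rcases (show ε ≤ ‖x‖ from hx'.2).eq_or_lt with h | h
  · set S : Set (Euc n) := {y | ε ^ 2 < ⟪x, y⟫} ∩ ball 0 ε₀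
    have hSo : IsOpen S := (isOpen_lt continuous_const (by fun_prop)).inter isOpen_ball
    have hSc : Convex ℝ S := by
      refine Convex.inter ?_ (convex_ball _ _)
      exact convex_halfSpace_gt (innerₗ (Euc n) x).isLinear _
    have hSs : ∀ᶠ r in 𝓝[>] (0:ℝ), (1 + r) • x ∈ S := by
      have h1 : 0 < ε₀ / ε - 1 := by
        rw [sub_pos, lt_div_iff₀ hε]; linarith
      filter_upwards [Ioo_mem_nhdsGT h1] with r hr
      constructor
      · change ε ^ 2 < ⟪x, (1 + r) • x⟫
        rw [inner_smul_right, real_inner_self_eq_norm_sq, ← h]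
        nlinarith [hr.1, pow_pos hε 2]
      · rw [mem_ball_zero_iff, scale_norm h.symm hr.1.le]
        have : 1 + r < ε₀ / ε := by linarith [hr.2]
        calc (1 + r) * ε < ε₀ / ε * ε := by gcongr
          _ = ε₀ := by field_simp
    have hxS : x ∈ closure S := mem_closure_of_tendsto (tendsto_scale x) hSs
    have hne : (interior S).Nonempty := by
      rw [hSo.interior_eq]; exact closure_nonempty_iff.1 ⟨x, hxS⟩
    refine (uniqueDiffWithinAt_convex hSc hne hxS).mono ?_
    rintro y ⟨h1, h2⟩
    rw [ring_eq hball hε hεε]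
    refine ⟨subset_closure (hball (ball_subset_closedBall h2)), ?_⟩
    change ε ^ 2 < ⟪x, y⟫ at h1
    change ε ≤ ‖y‖
    have := real_inner_le_norm x y
    rw [← h] at this
    nlinarith
  · have hu : UniqueDiffWithinAt ℝ (closure Ω₁) x :=
      uniqueDiffWithinAt_convex hc.closure ⟨0, by
        exact mem_interior.2 ⟨Ω₁, subset_closure, hΩo, h0⟩⟩ (by simpa using hx'.1)
    have hN : {y : Euc n | ε < ‖y‖} ∈ 𝓝 x := (isOpen_lt continuous_const continuous_norm).mem_nhds h
    refine (hu.inter hN).mono ?_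
    rintro y ⟨a, b⟩
    rw [ring_eq hball hε hεε]
    exact ⟨a, (show ε < ‖y‖ from b).le⟩

lemma ring_compact {Ω₁ : Set (Euc n)} (hb : IsBounded Ω₁) (ε : ℝ) : IsCompact (ringSet Ω₁ 0 ε) := by
  refine Metric.isCompact_of_isClosed_isBounded isClosed_closure ?_
  exact (hb.subset sdiff_subset).closure

lemma frontier_far {Ω₁ : Set (Euc n)} (hΩo : IsOpen Ω₁) {ε₀ : ℝ}
    (hball : closedBall (0 : Euc n) ε₀ ⊆ Ω₁) : ∀ x ∈ frontier Ω₁, ε₀ < ‖x‖ := by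
  intro x hx
  by_contra h
  push Not at h
  rw [hΩo.frontier_eq] at hx
  exact hx.2 (hball (by simpa using h))

lemma frontier_far2 {Ω₁ : Set (Euc n)} (hΩo : IsOpen Ω₁) (hb : IsBounded Ω₁) {ε₀ : ℝ}
    (hball : closedBall (0 : Euc n) ε₀ ⊆ Ω₁) : ∃ r, ε₀ < r ∧ ∀ x ∈ frontier Ω₁, r ≤ ‖x‖ := by
  have hc : IsCompact (frontier Ω₁) :=
    Metric.isCompact_of_isClosed_isBounded isClosed_frontier
      (hb.closure.subset frontier_subset_closure)
  rcases (frontier Ω₁).eq_empty_or_nonempty with h | h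
  · exact ⟨ε₀ + 1, by linarith, by simp [h]⟩
  · obtain ⟨y, hy, hm⟩ := hc.exists_isMinOn h continuous_norm.continuousOn
    exact ⟨‖y‖, frontier_far hΩo hball y hy, fun x hx => hm hx⟩

/-- second derivative facts on a set of unique differentiability -/
lemma hess_eq {u : Euc n → ℝ} {K : Set (Euc n)} (hK : UniqueDiffOn ℝ K) {x : Euc n} (hx : x ∈ K) :
    hessianWithin u K x = bmat (fderivWithin ℝ (fderivWithin ℝ u K) K x) := by
  funext i j
  unfold hessianWithin
  rw [iteratedFDerivWithin_two_apply _ hK hx]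
  rfl

lemma fd_diff {u : Euc n → ℝ} {K : Set (Euc n)} (hK : UniqueDiffOn ℝ K) (hu : ContDiffOn ℝ 2 u K) :
    ContDiffOn ℝ 1 (fderivWithin ℝ u K) K := hu.fderivWithin hK (by norm_num)

lemma hess_cont {u : Euc n → ℝ} {K : Set (Euc n)} (hK : UniqueDiffOn ℝ K) (hu : ContDiffOn ℝ 2 u K) :
    ContinuousOn (fun x => bmat (fderivWithin ℝ (fderivWithin ℝ u K) K x)) K := by
  have h := (fd_diff hK hu).continuousOn_fderivWithin hK (by norm_num)
  refine continuousOn_pi.2 fun i => continuousOn_pi.2 fun j => ?_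
  unfold bmat
  exact (h.clm_apply continuousOn_const).clm_apply continuousOn_const

end GeoPart

section CompPart
variable {n : ℕ}

lemma two_le_top : (2 : WithTop ℕ∞) ≤ ((⊤ : ℕ∞) : WithTop ℕ∞) := by
  exact WithTop.coe_le_coe.2 (le_top : (2 : ℕ∞) ≤ ⊤)

lemma cnk_pos {k : ℕ} (hkn : k ≤ n) : 0 < cnk n k := by
  unfold cnk
  have : (0 : ℝ) < n.choose k := by exact_mod_cast Nat.choose_pos hkn
  positivity

lemma cnk_pow {k : ℕ} (hk : 1 ≤ k) : cnk n k ^ k = n.choose k := by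
  unfold cnk
  rw [← Real.rpow_natCast, ← Real.rpow_mul (by positivity)]
  have : (k : ℝ) ≠ 0 := by positivity
  rw [one_div, inv_mul_cancel₀ this, Real.rpow_one]

lemma cnk_inv {k : ℕ} (hk : 1 ≤ k) (hkn : k ≤ n) : (n.choose k : ℝ) * (1 / cnk n k) ^ k = 1 := by
  rw [← cnk_pow hk, ← mul_pow, mul_one_div_cancel (cnk_pos hkn).ne', one_pow]

lemma pt_hess {k : ℕ} (hkn : k ≤ n) {f : Euc n → ℝ} {s : Set (Euc n)} {x : Euc n}
    (hf : ContDiffOn ℝ 2 f s) (hs : s ∈ 𝓝 x)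
    (h : InGardingCone k (hessianWithin f s x) ∧ sigmaMat k (hessianWithin f s x) = 1) :
    ∃ B, HasHess f x B ∧ GC (n - k) (bmat B) ∧ (Qp (bmat B)).coeff (n - k) = 1 := by
  obtain ⟨B, h1, h2⟩ := int_hess hf hs
  rw [h2] at h
  have h3 := garding_GC hkn h.1
  exact ⟨B, h1, h3, by rw [← sigma_coeff hkn h3.1]; exact h.2⟩

lemma bmat_sc (κ : ℝ) : bmat (κ • innB n) = κ • (1 : Matrix (Fin n) (Fin n) ℝ) := by
  rw [bmat_smul, bmat_inn]

lemma sc_coeff {k : ℕ} (hkn : k ≤ n) (κ : ℝ) :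
    (Qp (κ • (1 : Matrix (Fin n) (Fin n) ℝ))).coeff (n - k) = n.choose k * κ ^ k := by
  rw [scalar_coeff, Nat.choose_symm hkn, Nat.sub_sub_self hkn, mul_comm]

lemma psi_le {k : ℕ} (hkn : k ≤ n) {Ω₁ : Set (Euc n)} (hΩo : IsOpen Ω₁)
    (hΩb : IsBounded Ω₁) {ψ : Euc n → ℝ} (hψ : IsSol22 k Ω₁ ψ) {d r : ℝ} (hd : 0 < d)
    (hd1 : n.choose k * d ^ k < 1) (hr : 0 ≤ r) (hfr : ∀ x ∈ frontier Ω₁, r ≤ ‖x‖) :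
    ∀ x ∈ closure Ω₁, ψ x ≤ d / 2 * (‖x‖ ^ 2 - r ^ 2) := by
  obtain ⟨h1, h2, h3⟩ := hψ
  have hC2 : ContDiffOn ℝ 2 ψ (closure Ω₁) := h1.of_le two_le_top
  have key := min_principle (K := closure Ω₁) hΩb.isCompact_closure
    (h := fun x => d / 2 * (‖x‖ ^ 2 - r ^ 2) - ψ x) (by
      refine ContinuousOn.sub ?_ h1.continuousOn
      fun_prop) (by
      intro x hx
      by_cases hxΩ : x ∈ Ω₁
      · right
        have hn : closure Ω₁ ∈ 𝓝 x := mem_of_superset (hΩo.mem_nhds hxΩ) subset_closure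
        refine ⟨hn, fun hm => ?_⟩
        obtain ⟨B, b1, b2, b3⟩ := pt_hess hkn hC2 hn (h2 x hxΩ)
        have hq := HasHess.quad d (r ^ 2) x
        have hp := psd_of_min hq b1 (by rw [bmat_sc]; exact scalar_herm d) b2.1 hm
        have := mono_le b2 hp (n - k) le_rfl (Nat.sub_le _ _)
        rw [b3, bmat_sc, sc_coeff hkn] at this
        linarith
      · left
        have hf : x ∈ frontier Ω₁ := by rw [hΩo.frontier_eq]; exact ⟨hx, hxΩ⟩
        rw [h3 x hf]
        have := hfr x hf
        have : 0 ≤ ‖x‖ ^ 2 - r ^ 2 := by nlinarith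
        have : 0 ≤ d / 2 * (‖x‖ ^ 2 - r ^ 2) := by positivity
        linarith)
  intro x hx
  have := key x hx
  linarith

lemma sol_ge_psi {k : ℕ} (hk : 1 ≤ k) (hkn : k ≤ n) {Ω₁ : Set (Euc n)} (hΩo : IsOpen Ω₁)
    (hΩb : IsBounded Ω₁) {ε₀ ε : ℝ} (hball : closedBall (0 : Euc n) ε₀ ⊆ Ω₁)
    (hε : 0 < ε) (hεε : ε < ε₀) {ψ u : Euc n → ℝ} (hψ : IsSol22 k Ω₁ ψ) {M : ℝ}
    (hu : IsSol k Ω₁ 0 ε M u) {K₀ : ℝ} (hK0 : 1 < K₀)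
    (hb : ∀ x ∈ closedBall (0 : Euc n) ε₀, K₀ * ψ x ≤ - M) :
    ∀ x ∈ ringSet Ω₁ 0 ε, K₀ * ψ x ≤ u x := by
  obtain ⟨h1, h2, h3⟩ := hψ
  obtain ⟨g1, g2, g3, g4⟩ := hu
  have hC2 : ContDiffOn ℝ 2 ψ (closure Ω₁) := h1.of_le two_le_top
  have hsub : ringSet Ω₁ 0 ε ⊆ closure Ω₁ := closure_mono sdiff_subset
  have key := min_principle (ring_compact hΩb ε)
    (h := fun x => u x - K₀ * ψ x) (by
      refine ContinuousOn.sub g1.continuousOn ?_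
      exact continuousOn_const.mul (h1.continuousOn.mono hsub)) (by
      intro x hx
      rcases ring_cases hΩo hball hε hεε hx with h | h | h
      · left
        rw [g4 x (by simpa using h)]
        have := hb x (by simp [h]; linarith)
        linarith
      · left
        rw [g3 x h, h3 x h]; simp
      · right
        have hn := ring_nhds hΩo h
        refine ⟨hn, fun hm => ?_⟩
        have hn' : closure Ω₁ ∈ 𝓝 x := mem_of_superset hn hsub
        obtain ⟨B, b1, b2, b3⟩ := pt_hess hkn hC2 hn' (h2 x h.1)
        obtain ⟨C, c1, c2, c3⟩ := pt_hess hkn g1 hn (g2 x h)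
        have hG : GC (n - k) (bmat (K₀ • B)) := by
          rw [bmat_smul]; exact scale_GC b2 (by linarith)
        have hp := psd_of_min c1 (b1.mul K₀) c2.1 hG.1 hm
        have := mono_le hG hp (n - k) le_rfl (Nat.sub_le _ _)
        rw [c3, bmat_smul, Qp_scale _ _ (by linarith) _ (Nat.sub_le _ _), b3,
          Nat.sub_sub_self hkn] at this
        have h5 := one_lt_pow₀ hK0 (n := k) (by omega)
        linarith)
  intro x hx
  have := key x hx
  linarith

lemma sol_le_zero {k : ℕ} (hk : 1 ≤ k) (hkn : k ≤ n) {Ω₁ : Set (Euc n)} (hΩo : IsOpen Ω₁)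
    (hΩb : IsBounded Ω₁) {ε₀ ε : ℝ} (hball : closedBall (0 : Euc n) ε₀ ⊆ Ω₁)
    (hε : 0 < ε) (hεε : ε < ε₀) {u : Euc n → ℝ} {M : ℝ} (hM : 0 ≤ M)
    (hu : IsSol k Ω₁ 0 ε M u) :
    ∀ x ∈ ringSet Ω₁ 0 ε, u x ≤ 0 := by
  obtain ⟨g1, g2, g3, g4⟩ := hu
  have key := min_principle (ring_compact hΩb ε)
    (h := fun x => 0 / 2 * (‖x‖ ^ 2 - 0) - u x) (by
      refine ContinuousOn.sub ?_ g1.continuousOn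
      fun_prop) (by
      intro x hx
      rcases ring_cases hΩo hball hε hεε hx with h | h | h
      · left
        rw [g4 x (by simpa using h)]
        simpa using hM
      · left
        rw [g3 x h]; simp
      · right
        have hn := ring_nhds hΩo h
        refine ⟨hn, fun hm => ?_⟩
        obtain ⟨C, c1, c2, c3⟩ := pt_hess hkn g1 hn (g2 x h)
        have hp := psd_of_min (HasHess.quad 0 0 x) c1 (by rw [bmat_sc]; exact scalar_herm 0) c2.1 hm
        have := mono_le c2 hp (n - k) le_rfl (Nat.sub_le _ _)
        rw [c3, bmat_sc, sc_coeff hkn, zero_pow (by omega)] at this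
        linarith)
  intro x hx
  have := key x hx
  linarith

lemma sol_ge_quad {k : ℕ} (hkn : k ≤ n) {Ω₁ : Set (Euc n)} (hΩo : IsOpen Ω₁)
    (hΩb : IsBounded Ω₁) {ε₀ ε : ℝ} (hball : closedBall (0 : Euc n) ε₀ ⊆ Ω₁)
    (hε : 0 < ε) (hεε : ε < ε₀) {u : Euc n → ℝ} {M : ℝ}
    (hu : IsSol k Ω₁ 0 ε M u) {κ : ℝ} (hκ : 0 < κ) (hκ1 : 1 < n.choose k * κ ^ k)
    (hs : ∀ x ∈ frontier Ω₁, κ / 2 * (‖x‖ ^ 2 - ε ^ 2) ≤ M) :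
    ∀ x ∈ ringSet Ω₁ 0 ε, κ / 2 * (‖x‖ ^ 2 - ε ^ 2) ≤ u x + M := by
  obtain ⟨g1, g2, g3, g4⟩ := hu
  have key := min_principle (ring_compact hΩb ε)
    (h := fun x => (u x + M) - κ / 2 * (‖x‖ ^ 2 - ε ^ 2)) (by
      refine ContinuousOn.sub (g1.continuousOn.add continuousOn_const) ?_
      fun_prop) (by
      intro x hx
      rcases ring_cases hΩo hball hε hεε hx with h | h | h
      · left
        rw [g4 x (by simpa using h), h]
        simp
      · left
        rw [g3 x h]
        have := hs x h
        linarith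
      · right
        have hn := ring_nhds hΩo h
        refine ⟨hn, fun hm => ?_⟩
        obtain ⟨C, c1, c2, c3⟩ := pt_hess hkn g1 hn (g2 x h)
        have hG : GC (n - k) (bmat (κ • innB n)) := by
          rw [bmat_sc]; exact scalar_GC _ hκ
        have hp := psd_of_min (c1.add_const M) (HasHess.quad κ (ε ^ 2) x) c2.1 hG.1 hm
        have := mono_le hG hp (n - k) le_rfl (Nat.sub_le _ _)
        rw [c3, bmat_sc, sc_coeff hkn] at this
        linarith)
  intro x hx
  have := key x hx
  linarith

lemma rot_compare {k : ℕ} (hk : 1 ≤ k) (hkn : k ≤ n) {Ω₁ : Set (Euc n)} (hΩo : IsOpen Ω₁)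
    (hΩb : IsBounded Ω₁) {ε₀ ε : ℝ} (hball : closedBall (0 : Euc n) ε₀ ⊆ Ω₁)
    (hε : 0 < ε) (hεε : ε < ε₀) {u : Euc n → ℝ} {M M' : ℝ} (hM : M' ≤ M)
    (hu : IsSol k Ω₁ 0 ε M u) (hu0 : ∀ x ∈ ringSet Ω₁ 0 ε, u x ≤ 0)
    {Λ Rad η t κ : ℝ} (hΛ : 0 ≤ Λ) (hη : 0 ≤ η) (hRad : ∀ x ∈ closure Ω₁, ‖x‖ ≤ Rad)
    (hbd : ∀ x ∈ frontier Ω₁, ∀ y ∈ ringSet Ω₁ 0 ε, - (Λ * ‖y - x‖) ≤ u y)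
    (hκ1 : 1 / cnk n k < κ)
    (hs : ∀ x ∈ frontier Ω₁, κ / 2 * (‖x‖ ^ 2 - ε ^ 2) ≤ M')
    (R : Euc n →ₗᵢ[ℝ] Euc n) (hR : ∀ x, ‖R x - x‖ ≤ η * ‖x‖)
    (ht : 0 < t) (ht1 : t < 1) (hC : Λ * η * Rad ≤ t * (M - M')) :
    ∀ x ∈ closure Ω₁, R x ∈ closure Ω₁ → ε ≤ ‖x‖ →
      (1 - t) * (u x + M) + t * (κ / 2 * (‖x‖ ^ 2 - ε ^ 2)) ≤ u (R x) + M := by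
  obtain ⟨g1, g2, g3, g4⟩ := hu
  set K' : Set (Euc n) := (closure Ω₁ ∩ {x | ε ≤ ‖x‖}) ∩ R ⁻¹' (closure Ω₁) with hK'
  have hKc : IsCompact K' := by
    rw [hK', ← ring_eq hball hε hεε]
    exact (ring_compact hΩb ε).inter_right (isClosed_closure.preimage R.continuous)
  have m1 : ∀ x ∈ K', x ∈ ringSet Ω₁ 0 ε := fun x hx => by
    rw [ring_eq hball hε hεε]; exact hx.1
  have m2 : ∀ x ∈ K', R x ∈ ringSet Ω₁ 0 ε := fun x hx => by
    rw [ring_eq hball hε hεε]; exact ⟨hx.2, by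
      change ε ≤ ‖R x‖
      rw [R.norm_map]; exact hx.1.2⟩
  have key := min_principle hKc
    (h := fun x => (u (R x) + M) - ((1 - t) * (u x + M) + t * (κ / 2 * (‖x‖ ^ 2 - ε ^ 2)))) (by
      have c1 : ContinuousOn u K' := g1.continuousOn.mono m1
      have c2 : ContinuousOn (fun x => u (R x)) K' :=
        g1.continuousOn.comp R.continuous.continuousOn m2
      refine (c2.add continuousOn_const).sub ((continuousOn_const.mul
        (c1.add continuousOn_const)).add ?_)
      fun_prop) (by
      intro x hx
      have hxu := hu0 x (m1 x hx)
      rcases ring_cases hΩo hball hε hεε (m1 x hx) with h | h | h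
      · left
        rw [g4 x (by simpa using h), g4 (R x) (by simp [h]), h]
        simp
      · left
        have e1 := hbd x h (R x) (m2 x hx)
        have e2 := hR x
        have e3 := hRad x hx.1.1
        have e4 := hs x h
        rw [g3 x h]
        have e5 : Λ * ‖R x - x‖ ≤ Λ * η * Rad := by
          rw [mul_assoc]
          exact mul_le_mul_of_nonneg_left (e2.trans (mul_le_mul_of_nonneg_left e3 hη)) hΛ
        nlinarith
      · by_cases hRx : R x ∈ frontier Ω₁
        · left
          have e4 := hs _ hRx
          rw [R.norm_map] at e4
          rw [g3 _ hRx]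
          nlinarith
        · right
          have hRΩ : R x ∈ Ω₁ \ closedBall (0 : Euc n) ε := by
            rcases ring_cases hΩo hball hε hεε (m2 x hx) with h' | h' | h'
            · exfalso
              rw [R.norm_map] at h'
              exact h.2 (by simp [h'])
            · exact absurd h' hRx
            · exact h'
          have hn := ring_nhds hΩo h
          have hnR := ring_nhds hΩo hRΩ
          refine ⟨?_, fun hm => ?_⟩
          · refine inter_mem ?_ (R.continuous.continuousAt ?_)
            · rw [← ring_eq hball hε hεε]; exact hn
            · exact mem_of_superset hnR (closure_mono sdiff_subset)
          · obtain ⟨B, b1, b2, b3⟩ := pt_hess hkn g1 hn (g2 x h)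
            obtain ⟨C, c1, c2, c3⟩ := pt_hess hkn g1 hnR (g2 _ hRΩ)
            have q1 := (c1.comp R).add_const M
            have q2 := ((b1.add_const M).mul (1 - t)).add ((HasHess.quad κ (ε ^ 2) x).mul t)
            have eq2 : bmat ((1 - t) • B + t • κ • innB n) =
                (1 - t) • bmat B + (t * κ) • (1 : Matrix (Fin n) (Fin n) ℝ) := by
              rw [bmat_add, bmat_smul, bmat_smul, bmat_sc, smul_smul]
            have hg : 0 < 1 / cnk n k := by have := cnk_pos hkn; positivity
            obtain ⟨G1, G2⟩ := combo hk hkn b2 b3 hg (cnk_inv hk hkn) hκ1 ht ht1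
            rw [← eq2] at G1 G2
            have G3 : GC (n - k) (bmat (bcomp C R)) := by
              rw [bmat_bcomp]; exact conj_GC (rmat_orth R) c2
            have hp := psd_of_min q1 q2 G3.1 G1.1 hm
            have := mono_le G1 hp (n - k) le_rfl (Nat.sub_le _ _)
            rw [bmat_bcomp, Qp_conj _ _ (rmat_orth R), c3] at this
            linarith)
  intro x hx hx2 hx3
  have := key x ⟨⟨hx, hx3⟩, hx2⟩
  linarith

end CompPart

section BdPart
variable {n : ℕ}

lemma exists_rot {e f : Euc n} (he : ‖e‖ = 1) (hf : ‖f‖ = 1) (hef : ⟪e, f⟫ = 0) (θ : ℝ) :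
    ∃ R : Euc n →ₗᵢ[ℝ] Euc n, R e = Real.cos θ • e + Real.sin θ • f ∧
      ∀ x, ‖R x - x‖ ≤ 2 * |θ| * ‖x‖ := by
  have hee : ⟪e, e⟫ = 1 := by rw [real_inner_self_eq_norm_sq, he]; norm_num
  have hff : ⟪f, f⟫ = 1 := by rw [real_inner_self_eq_norm_sq, hf]; norm_num
  have hfe : ⟪f, e⟫ = 0 := by rw [real_inner_comm]; exact hef
  set c := Real.cos θ
  set s := Real.sin θ
  have hcs : c ^ 2 + s ^ 2 = 1 := Real.cos_sq_add_sin_sq θ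
  let L : Euc n →ₗ[ℝ] Euc n :=
    { toFun := fun x => x + (((c - 1) * ⟪x, e⟫ - s * ⟪x, f⟫) • e + ((c - 1) * ⟪x, f⟫ + s * ⟪x, e⟫) • f)
      map_add' := fun x y => by
        simp only [inner_add_left]
        module
      map_smul' := fun r x => by
        simp only [real_inner_smul_left, RingHom.id_apply]
        module }
  have hLx : ∀ x, L x = x + (((c - 1) * ⟪x, e⟫ - s * ⟪x, f⟫) • e + ((c - 1) * ⟪x, f⟫ + s * ⟪x, e⟫) • f) :=
    fun x => rfl
  have hd : ∀ α β : ℝ, ‖α • e + β • f‖ ^ 2 = α ^ 2 + β ^ 2 := by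
    intro α β
    rw [norm_add_sq_real, norm_smul, norm_smul, he, hf, real_inner_smul_left, real_inner_smul_right, hef]
    simp
  refine ⟨⟨L, fun x => ?_⟩, ?_, fun x => ?_⟩
  · have : ‖L x‖ ^ 2 = ‖x‖ ^ 2 := by
      rw [hLx, norm_add_sq_real, hd, inner_add_right, real_inner_smul_right, real_inner_smul_right]
      linear_combination (⟪x, e⟫ ^ 2 + ⟪x, f⟫ ^ 2) * hcs
    exact (sq_eq_sq₀ (norm_nonneg _) (norm_nonneg _)).1 this
  · change L e = _
    rw [hLx, hee, hef]
    module
  · change ‖L x - x‖ ≤ _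
    rw [hLx, add_sub_cancel_left]
    apply le_of_sq_le_sq _ (by positivity)
    rw [hd, mul_pow, mul_pow, sq_abs]
    have h1 : 1 - θ ^ 2 / 2 ≤ c := Real.one_sub_sq_div_two_le_cos
    have h2 := real_inner_mul_inner_self_le x e
    have h3 := real_inner_mul_inner_self_le x f
    rw [hee, real_inner_self_eq_norm_sq] at h2
    rw [hff, real_inner_self_eq_norm_sq] at h3
    have e1 : ((c - 1) * ⟪x, e⟫ - s * ⟪x, f⟫) ^ 2 + ((c - 1) * ⟪x, f⟫ + s * ⟪x, e⟫) ^ 2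
      = (2 - 2 * c) * (⟪x, e⟫ ^ 2 + ⟪x, f⟫ ^ 2) := by
      linear_combination (⟪x, e⟫ ^ 2 + ⟪x, f⟫ ^ 2) * hcs
    rw [e1]
    have h4 : ⟪x, e⟫ ^ 2 + ⟪x, f⟫ ^ 2 ≤ 2 * ‖x‖ ^ 2 := by nlinarith
    have h5 : 2 - 2 * c ≤ θ ^ 2 := by linarith
    calc (2 - 2 * c) * (⟪x, e⟫ ^ 2 + ⟪x, f⟫ ^ 2) ≤ θ ^ 2 * (2 * ‖x‖ ^ 2) := by
          apply mul_le_mul h5 h4 (by positivity) (by positivity)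
      _ ≤ 2 ^ 2 * θ ^ 2 * ‖x‖ ^ 2 := by nlinarith [sq_nonneg (θ * ‖x‖)]

lemma rd_nonneg {φ : ℝ → ℝ} {d δ : ℝ} (hδ : 0 < δ) (h : HasDerivWithinAt φ d (Icc 0 δ) 0)
    (h0 : φ 0 = 0) (hp : ∀ r ∈ Icc 0 δ, 0 ≤ φ r) : 0 ≤ d := by
  have h1 : HasDerivWithinAt φ d (Ioo 0 δ) 0 := h.mono Ioo_subset_Icc_self
  rw [hasDerivWithinAt_iff_tendsto_slope' (by simp)] at h1
  rw [nhdsWithin_Ioo_eq_nhdsGT hδ] at h1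
  refine ge_of_tendsto h1 ?_
  filter_upwards [Ioo_mem_nhdsGT hδ] with r hr
  rw [slope_def_field, h0]
  have := hp r ⟨hr.1.le, hr.2.le⟩
  have := hr.1
  simp only [sub_zero]
  positivity

lemma two_side {h : ℝ → ℝ} {d C δ : ℝ} (hδ : 0 < δ) (hd : HasDerivAt h d 0)
    (hp : ∀ r, |r| ≤ δ → (1 - C * |r|) * h 0 ≤ h r) : |d| ≤ C * h 0 := by
  rw [abs_le]
  constructor
  · have h1 : HasDerivAt (fun r => h r - (1 - C * r) * h 0) (d + C * h 0) 0 := by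
      have := hd.sub ((((hasDerivAt_id (0:ℝ)).const_mul C).const_sub 1).mul_const (h 0))
      exact this.congr_deriv (by ring)
    have := rd_nonneg hδ h1.hasDerivWithinAt (by simp) (fun r hr => by
      have := hp r (by rw [abs_of_nonneg hr.1]; exact hr.2)
      rw [abs_of_nonneg hr.1] at this
      linarith)
    linarith
  · have hd' : HasDerivAt h d (-(0:ℝ)) := by simpa using hd
    have h1 : HasDerivAt (fun r => h (-r) - (1 - C * r) * h 0) (-d + C * h 0) 0 := by
      have := (hd'.scomp (0:ℝ) (hasDerivAt_neg (0:ℝ))).sub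
        ((((hasDerivAt_id (0:ℝ)).const_mul C).const_sub 1).mul_const (h 0))
      exact this.congr_deriv (by simp)
    have := rd_nonneg hδ h1.hasDerivWithinAt (by simp) (fun r hr => by
      have := hp (-r) (by rw [abs_neg, abs_of_nonneg hr.1]; exact hr.2)
      rw [abs_neg, abs_of_nonneg hr.1] at this
      linarith)
    linarith

lemma radial_deriv {u : Euc n → ℝ} {K : Set (Euc n)} {F : Euc n →L[ℝ] ℝ} {q : Euc n} {δ : ℝ}
    (h : HasFDerivWithinAt u F K q) (hK : ∀ r ∈ Icc 0 δ, (1 + r) • q ∈ K) :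
    HasDerivWithinAt (fun r : ℝ => u ((1 + r) • q)) (F q) (Icc 0 δ) 0 := by
  have hl : HasDerivAt (fun r : ℝ => (1 + r) • q) q 0 := by
    have := ((hasDerivAt_id (0:ℝ)).const_add 1).smul_const q
    rw [one_smul] at this
    exact this
  have h' : HasFDerivWithinAt u F K ((fun r : ℝ => (1 + r) • q) 0) := by simpa using h
  exact h'.comp_hasDerivWithinAt (0:ℝ) hl.hasDerivWithinAt hK

def circ (p τ : Euc n) (θ : ℝ) : Euc n := Real.cos θ • p + Real.sin θ • τ

lemma circ_deriv (p τ : Euc n) (θ : ℝ) :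
    HasDerivAt (circ p τ) (Real.cos θ • τ - Real.sin θ • p) θ := by
  have := ((Real.hasDerivAt_cos θ).smul_const p).add ((Real.hasDerivAt_sin θ).smul_const τ)
  exact this.congr_deriv (by module)

lemma circ_norm {p τ : Euc n} {ε : ℝ} (hp : ‖p‖ = ε) (hτ : ‖τ‖ = ε) (h : ⟪p, τ⟫ = 0) (θ : ℝ) :
    ‖circ p τ θ‖ = ε := by
  have hε : 0 ≤ ε := hp ▸ norm_nonneg _
  have : ‖circ p τ θ‖ ^ 2 = ε ^ 2 := by
    rw [circ, norm_add_sq_real, norm_smul, norm_smul, hp, hτ, real_inner_smul_left,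
      real_inner_smul_right, h, mul_pow, mul_pow, Real.norm_eq_abs, Real.norm_eq_abs, sq_abs, sq_abs]
    linear_combination ε ^ 2 * Real.cos_sq_add_sin_sq θ
  exact (sq_eq_sq₀ (norm_nonneg _) hε).1 this

lemma circ_zero (p τ : Euc n) : circ p τ 0 = p := by simp [circ]

section
variable {u : Euc n → ℝ} {K : Set (Euc n)} {F : Euc n → Euc n →L[ℝ] ℝ} {H : Bil n} {p τ : Euc n}
  {ε M : ℝ}

lemma bd_first (hF : ∀ x ∈ K, HasFDerivWithinAt u (F x) K x)
    (hS : ∀ x, ‖x‖ = ε → x ∈ K) (hu : ∀ x, ‖x‖ = ε → u x = -M)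
    (hp : ‖p‖ = ε) (hτ : ‖τ‖ = ε) (hpτ : ⟪p, τ⟫ = 0) (θ : ℝ) :
    F (circ p τ θ) (Real.cos θ • τ - Real.sin θ • p) = 0 := by
  have h1 := (hF _ (hS _ (circ_norm hp hτ hpτ θ))).comp_hasDerivWithinAt θ
    (circ_deriv p τ θ).hasDerivWithinAt (s := univ) (fun r _ => hS _ (circ_norm hp hτ hpτ r))
  rw [hasDerivWithinAt_univ] at h1
  have h2 : (u ∘ circ p τ) = fun _ => -M := by
    funext r; exact hu _ (circ_norm hp hτ hpτ r)
  rw [h2] at h1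
  exact h1.unique (hasDerivAt_const θ (-M))

lemma circF_deriv (hH : HasFDerivWithinAt F H K p)
    (hS : ∀ x, ‖x‖ = ε → x ∈ K)
    (hp : ‖p‖ = ε) (hτ : ‖τ‖ = ε) (hpτ : ⟪p, τ⟫ = 0) :
    HasDerivAt (fun θ => F (circ p τ θ)) (H τ) 0 := by
  have hH' : HasFDerivWithinAt F H K (circ p τ 0) := by rwa [circ_zero]
  have h1 := hH'.comp_hasDerivWithinAt (0:ℝ)
    (circ_deriv p τ 0).hasDerivWithinAt (s := univ) (fun r _ => hS _ (circ_norm hp hτ hpτ r))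
  rw [hasDerivWithinAt_univ] at h1
  refine HasDerivAt.congr_deriv h1 ?_
  simp

lemma bd_tan (hF : ∀ x ∈ K, HasFDerivWithinAt u (F x) K x) (hH : HasFDerivWithinAt F H K p)
    (hS : ∀ x, ‖x‖ = ε → x ∈ K) (hu : ∀ x, ‖x‖ = ε → u x = -M)
    (hp : ‖p‖ = ε) (hτ : ‖τ‖ = ε) (hpτ : ⟪p, τ⟫ = 0) : H τ τ = F p p := by
  have h1 := circF_deriv hH hS hp hτ hpτ
  have h2 : HasDerivAt (fun θ : ℝ => Real.cos θ • τ - Real.sin θ • p) (-p) 0 := by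
    have := ((Real.hasDerivAt_cos 0).smul_const τ).sub ((Real.hasDerivAt_sin 0).smul_const p)
    exact this.congr_deriv (by simp)
  have h3 := h1.clm_apply h2
  have h4 : (fun θ => F (circ p τ θ) (Real.cos θ • τ - Real.sin θ • p)) = fun _ => 0 := by
    funext θ; exact bd_first hF hS hu hp hτ hpτ θ
  rw [h4] at h3
  have h5 := h3.unique (hasDerivAt_const (0:ℝ) (0:ℝ))
  rw [circ_zero] at h5
  simp at h5
  linarith

lemma bd_mix (hF : ∀ x ∈ K, HasFDerivWithinAt u (F x) K x) (hH : HasFDerivWithinAt F H K p)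
    (hS : ∀ x, ‖x‖ = ε → x ∈ K) (hu : ∀ x, ‖x‖ = ε → u x = -M)
    (hp : ‖p‖ = ε) (hτ : ‖τ‖ = ε) (hpτ : ⟪p, τ⟫ = 0) {C δ : ℝ} (hδ : 0 < δ)
    (hc : ∀ θ, |θ| ≤ δ → (1 - C * |θ|) * F p p ≤ F (circ p τ θ) (circ p τ θ)) :
    |H τ p| ≤ C * F p p := by
  have h1 := (circF_deriv hH hS hp hτ hpτ).clm_apply (circ_deriv p τ 0)
  have h0 := bd_first hF hS hu hp hτ hpτ 0
  rw [circ_zero] at h0 h1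
  simp at h0 h1
  rw [h0, add_zero] at h1
  have := two_side (h := fun θ => F (circ p τ θ) (circ p τ θ)) (C := C) hδ h1 (by
    simpa only [circ_zero] using hc)
  simpa only [circ_zero] using this

end

end BdPart

section AlgPart
open Matrix
variable {n : ℕ}

lemma bil_symm {B : Bil n} (h : (bmat B).IsHermitian) (x y : Euc n) : B x y = B y x := by
  rw [bmat_form, bmat_form, Finset.sum_comm]
  refine Finset.sum_congr rfl fun i _ => Finset.sum_congr rfl fun j _ => ?_
  have := h.apply i j
  simp only [star_trivial] at this
  rw [this]; ring

lemma form_id {B : Bil n} (h : (bmat B).IsHermitian) {ν : Euc n} (hν : ‖ν‖ = 1) {a : ℝ}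
    (ht : ∀ τ, ‖τ‖ = 1 → ⟪ν, τ⟫ = 0 → B τ τ = a) (v : Euc n) :
    B v v = a * (‖v‖ ^ 2 - ⟪v, ν⟫ ^ 2) + 2 * ⟪v, ν⟫ * B (v - ⟪v, ν⟫ • ν) ν + ⟪v, ν⟫ ^ 2 * B ν ν := by
  set z := ⟪v, ν⟫ with hz
  set w := v - z • ν with hw
  have hνν : ⟪ν, ν⟫ = 1 := by rw [real_inner_self_eq_norm_sq, hν]; norm_num
  have hwν : ⟪ν, w⟫ = 0 := by
    rw [hw, inner_sub_right, real_inner_smul_right, hνν, real_inner_comm, ← hz]; ring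
  have hv : v = w + z • ν := by rw [hw]; abel
  have hnorm : ‖v‖ ^ 2 = ‖w‖ ^ 2 + z ^ 2 := by
    conv_lhs => rw [hv]
    rw [norm_add_sq_real, real_inner_smul_right, real_inner_comm, hwν, norm_smul, hν, mul_pow,
      Real.norm_eq_abs, sq_abs]; ring
  have hww : B w w = a * ‖w‖ ^ 2 := by
    rcases eq_or_ne w 0 with h0 | h0
    · rw [h0]; simp
    · have hn : ‖w‖ ≠ 0 := norm_ne_zero_iff.2 h0
      have := ht (‖w‖⁻¹ • w) (by rw [norm_smul, norm_inv, norm_norm, inv_mul_cancel₀ hn])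
        (by rw [real_inner_smul_right, hwν, mul_zero])
      simp at this
      field_simp at this
      linarith
  have : B v v = B w w + 2 * z * B w ν + z ^ 2 * B ν ν := by
    conv_lhs => rw [hv]
    simp only [map_add, map_smul, _root_.add_apply, _root_.smul_apply, smul_eq_mul]
    rw [bil_symm h ν w]; ring
  rw [this, hww, hnorm]; ring

lemma trace_id {B : Bil n} (h : (bmat B).IsHermitian) {ν : Euc n} (hν : ‖ν‖ = 1) {a : ℝ}
    (ht : ∀ τ, ‖τ‖ = 1 → ⟪ν, τ⟫ = 0 → B τ τ = a) :
    (bmat B).trace = (n - 1) * a + B ν ν := by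
  have h1 : ∀ i, ⟪(EuclideanSpace.single i (1:ℝ) : Euc n), ν⟫ = ν i := fun i => by
    rw [EuclideanSpace.inner_single_left]; simp
  have h2 : ∑ i, ν i ^ 2 = 1 := by
    have := EuclideanSpace.norm_sq_eq ν
    rw [hν] at this
    simpa using this.symm
  have h3 : ∑ i, ν i * B (EuclideanSpace.single i 1) ν = B ν ν := by
    conv_rhs => rw [euc_sum ν]
    rw [← euc_sum ν]
    conv_rhs => lhs; rw [euc_sum ν]
    simp only [map_sum, map_smul, _root_.sum_apply, _root_.smul_apply, smul_eq_mul]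
  have h4 : ∀ i, bmat B i i = a * (1 - ν i ^ 2) + 2 * (ν i * B (EuclideanSpace.single i 1) ν)
      - ν i ^ 2 * B ν ν := by
    intro i
    have := form_id h hν ht (EuclideanSpace.single i (1:ℝ))
    rw [h1] at this
    change B _ _ = _
    rw [this]
    simp only [map_sub, map_smul, _root_.sub_apply, _root_.smul_apply, smul_eq_mul]
    simp
    ring
  rw [Matrix.trace]
  simp only [diag_apply, h4, Finset.sum_sub_distrib, Finset.sum_add_distrib, ← Finset.mul_sum,
    ← Finset.sum_mul, h2, h3]
  simp
  ring

lemma lower_form {B : Bil n} (h : (bmat B).IsHermitian) {ν : Euc n} (hν : ‖ν‖ = 1) {a C : ℝ}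
    (ha : 0 ≤ a)
    (ht : ∀ τ, ‖τ‖ = 1 → ⟪ν, τ⟫ = 0 → B τ τ = a)
    (hm : ∀ τ, ‖τ‖ = 1 → ⟪ν, τ⟫ = 0 → |B τ ν| ≤ C * a) (v : Euc n) :
    a / 2 * ‖v‖ ^ 2 + (B ν ν - (2 * C ^ 2 + 1) * a) * ⟪v, ν⟫ ^ 2 ≤ B v v := by
  rw [form_id h hν ht v]
  set z := ⟪v, ν⟫ with hz
  set w := v - z • ν with hw
  have hνν : ⟪ν, ν⟫ = 1 := by rw [real_inner_self_eq_norm_sq, hν]; norm_num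
  have hwν : ⟪ν, w⟫ = 0 := by
    rw [hw, inner_sub_right, real_inner_smul_right, hνν, real_inner_comm, ← hz]; ring
  have hv : v = w + z • ν := by rw [hw]; abel
  have hnorm : ‖v‖ ^ 2 = ‖w‖ ^ 2 + z ^ 2 := by
    conv_lhs => rw [hv]
    rw [norm_add_sq_real, real_inner_smul_right, real_inner_comm, hwν, norm_smul, hν, mul_pow,
      Real.norm_eq_abs, sq_abs]; ring
  have hww : |B w ν| ≤ C * a * ‖w‖ := by
    rcases eq_or_ne w 0 with h0 | h0
    · rw [h0]; simp
    · have hn : 0 < ‖w‖ := norm_pos_iff.2 h0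
      have := hm (‖w‖⁻¹ • w) (by rw [norm_smul, norm_inv, norm_norm, inv_mul_cancel₀ hn.ne'])
        (by rw [real_inner_smul_right, hwν, mul_zero])
      simp [abs_mul] at this
      rw [inv_mul_le_iff₀ hn] at this
      linarith
  have h1 : -(C * a * ‖w‖ * |z|) ≤ z * B w ν := by
    have : |z * B w ν| ≤ C * a * ‖w‖ * |z| := by
      rw [abs_mul, mul_comm]; gcongr
    exact (abs_le.1 this).1
  have h2 : 0 ≤ a * (‖w‖ - 2 * C * |z|) ^ 2 := by positivity
  have h3 : |z| ^ 2 = z ^ 2 := sq_abs z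
  rw [hnorm]
  have h4 : 0 ≤ a * ‖w‖ ^ 2 - 4 * (C * a * ‖w‖ * |z|) + 4 * C ^ 2 * a * z ^ 2 := by
    rw [← h3]; refine h2.trans (le_of_eq (by ring))
  nlinarith [mul_nonneg ha (sq_nonneg z)]

lemma upper_alg {k : ℕ} (hk : 1 ≤ k) (hkn : k ≤ n) {B : Bil n} (h : (bmat B).IsHermitian)
    (h1 : (Qp (bmat B)).coeff (n - k) = 1)
    {ν : Euc n} (hν : ‖ν‖ = 1) {a C : ℝ} (ha : 0 < a) (ha1 : 1 ≤ n.choose k * a ^ k)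
    (ht : ∀ τ, ‖τ‖ = 1 → ⟪ν, τ⟫ = 0 → B τ τ = a)
    (hm : ∀ τ, ‖τ‖ = 1 → ⟪ν, τ⟫ = 0 → |B τ ν| ≤ C * a) :
    B ν ν ≤ (2 * C ^ 2 + 1 + 2 ^ (k - 1) * n.choose k) * a := by
  set L := B ν ν - (2 * C ^ 2 + 1) * a with hL
  rcases le_or_gt L 0 with h0 | h0
  · have : 0 ≤ (2:ℝ) ^ (k - 1) * n.choose k * a := by positivity
    nlinarith
  set c : Fin n → ℝ := fun i => Real.sqrt L * ν i with hc
  have hs : Real.sqrt L ^ 2 = L := Real.sq_sqrt h0.le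
  have hνs : ∑ i, ν i ^ 2 = 1 := by
    have := EuclideanSpace.norm_sq_eq ν
    rw [hν] at this
    simpa using this.symm
  have hGC := (mono_rank_one (scalar_GC (n := n) (n - k) (half_pos ha)) c).1
  have hpsd : (bmat B - ((a / 2) • (1 : Matrix (Fin n) (Fin n) ℝ) + vecMulVec c c)).PosSemidef := by
    refine PosSemidef.of_dotProduct_mulVec_nonneg (h.sub hGC.1) fun x => ?_
    have hf := lower_form h hν ha.le ht hm (WithLp.toLp 2 x)
    rw [← hL, bmat_form B (WithLp.toLp 2 x), EuclideanSpace.norm_sq_eq] at hf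
    have e1 : x ⬝ᵥ (bmat B *ᵥ x) = ∑ i, ∑ j, x i * x j * bmat B i j := by
      simp only [dotProduct, mulVec, Finset.mul_sum]
      refine Finset.sum_congr rfl fun i _ => Finset.sum_congr rfl fun j _ => ?_
      ring
    have e2 : x ⬝ᵥ ((vecMulVec c c) *ᵥ x) = (x ⬝ᵥ c) ^ 2 := by
      rw [vecMulVec_mulVec, dotProduct_smul, dotProduct_comm c x]
      simp [sq]
    have e3 : x ⬝ᵥ c = Real.sqrt L * ⟪(WithLp.toLp 2 x : Euc n), ν⟫ := by
      rw [PiLp.inner_apply, Finset.mul_sum]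
      simp only [dotProduct, hc]
      refine Finset.sum_congr rfl fun i _ => ?_
      simp; ring
    rw [star_trivial, sub_mulVec, dotProduct_sub, add_mulVec, dotProduct_add, e1, e2, e3, mul_pow, hs,
      smul_mulVec, one_mulVec, dotProduct_smul]
    have e4 : x ⬝ᵥ x = ∑ i, ‖(WithLp.toLp 2 x : Euc n) i‖ ^ 2 := by
      simp [dotProduct, sq]
    rw [e4]
    simp only [smul_eq_mul]
    simp only at hf
    linarith
  have hle := mono_le hGC hpsd (n - k) le_rfl (Nat.sub_le _ _)
  rw [h1] at hle
  have hco : L * (a / 2) ^ (k - 1) ≤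
      (Qp ((a / 2) • (1 : Matrix (Fin n) (Fin n) ℝ) + vecMulVec c c)).coeff (n - k) := by
    rw [Matrix.smul_one_eq_diagonal, Qp_rank_one]
    simp only [Finset.prod_const, Finset.card_univ, Fintype.card_fin, Finset.mem_univ,
      Finset.card_erase_of_mem, ← Finset.sum_mul]
    rw [← map_sum, Polynomial.coeff_add, Polynomial.coeff_C_mul, Polynomial.coeff_X_add_C_pow,
      Polynomial.coeff_X_add_C_pow]
    have e1 : ∑ i, c i ^ 2 = L := by
      simp only [hc, mul_pow, hs, ← Finset.mul_sum, hνs, mul_one]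
    rw [e1]
    have e2 : n - 1 - (n - k) = k - 1 := by omega
    rw [e2]
    have e3 : (1:ℝ) ≤ (n - 1).choose (n - k) := by
      exact_mod_cast Nat.choose_pos (by omega)
    have e4 : 0 ≤ (a / 2) ^ (n - (n - k)) * (n.choose (n - k) : ℝ) := by positivity
    have e5 : L * (a / 2) ^ (k - 1) ≤ L * ((a / 2) ^ (k - 1) * (n - 1).choose (n - k)) := by
      apply mul_le_mul_of_nonneg_left _ h0.le
      exact le_mul_of_one_le_right (by positivity) e3
    linarith
  have hfin : L * (a / 2) ^ (k - 1) ≤ n.choose k * a ^ k := by linarith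
  have hap : a ^ k = a * a ^ (k - 1) := by
    rw [← pow_succ']; congr 1; omega
  rw [hap, div_pow] at hfin
  have hpos : 0 < a ^ (k - 1) := by positivity
  have h2 : (0:ℝ) < 2 ^ (k - 1) := by positivity
  have : L ≤ 2 ^ (k - 1) * n.choose k * a := by
    rw [mul_div_assoc', div_le_iff₀ h2] at hfin
    refine le_of_mul_le_mul_right ?_ hpos
    linarith
  linarith

end AlgPart

section MainPart
variable {n : ℕ}

lemma psi_lip {Ω₁ : Set (Euc n)} (hΩo : IsOpen Ω₁) (hc : Convex ℝ Ω₁) (hb : IsBounded Ω₁)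
    (hne : Ω₁.Nonempty) {ψ : Euc n → ℝ} (hψ : ContDiffOn ℝ 2 ψ (closure Ω₁)) :
    ∃ L : ℝ, 0 ≤ L ∧ ∀ x ∈ closure Ω₁, ∀ y ∈ closure Ω₁, |ψ y - ψ x| ≤ L * ‖y - x‖ := by
  have hcl : Convex ℝ (closure Ω₁) := hc.closure
  have hud : UniqueDiffOn ℝ (closure Ω₁) := uniqueDiffOn_convex hcl (by
    obtain ⟨x, hx⟩ := hne
    exact ⟨x, mem_interior.2 ⟨Ω₁, subset_closure, hΩo, hx⟩⟩)
  have hcont := hψ.continuousOn_fderivWithin hud (by norm_num)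
  obtain ⟨L, hL⟩ := (hb.isCompact_closure).exists_bound_of_continuousOn hcont
  refine ⟨max L 0, le_max_right _ _, fun x hx y hy => ?_⟩
  have := hcl.norm_image_sub_le_of_norm_fderivWithin_le (𝕜 := ℝ) (C := max L 0)
    (hψ.differentiableOn (by norm_num)) (fun z hz => (hL z hz).trans (le_max_left _ _)) hx hy
  simpa using this

lemma limit_hess {k : ℕ} (hk : 1 ≤ k) (hkn : k ≤ n) {Ω₁ : Set (Euc n)} (hΩo : IsOpen Ω₁)
    (hc : Convex ℝ Ω₁) {ε₀ ε : ℝ} (hball : closedBall (0 : Euc n) ε₀ ⊆ Ω₁)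
    (hε : 0 < ε) (hεε : ε < ε₀) {u : Euc n → ℝ} {M : ℝ}
    (hu : IsSol k Ω₁ 0 ε M u) {p : Euc n} (hp : ‖p‖ = ε) (hpK : p ∈ ringSet Ω₁ 0 ε) {H : Bil n}
    (hH : H = fderivWithin ℝ (fderivWithin ℝ u (ringSet Ω₁ 0 ε)) (ringSet Ω₁ 0 ε) p) :
    (bmat H).IsHermitian ∧ (Qp (bmat H)).coeff (n - k) = 1 ∧ 0 ≤ (bmat H).trace := by
  obtain ⟨g1, g2, g3, g4⟩ := hu
  set K := ringSet Ω₁ (0 : Euc n) ε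
  have hK : UniqueDiffOn ℝ K := ring_unique hΩo hc hball hε hεε
  have hcont := hess_cont hK g1
  have hmem := scale_mem hball hε hεε hp
  have ht : Tendsto (fun r : ℝ => (1 + r) • p) (𝓝[>] 0) (𝓝[K] p) := by
    refine tendsto_nhdsWithin_iff.2 ⟨tendsto_scale p, ?_⟩
    filter_upwards [hmem] with r hr using subset_closure hr
  have ht2 := (hcont p hpK).tendsto.comp ht
  have hev : ∀ᶠ r in 𝓝[>] (0:ℝ),
      bmat (fderivWithin ℝ (fderivWithin ℝ u K) K ((1 + r) • p)) ∈
        {A : Matrix (Fin n) (Fin n) ℝ | A.IsHermitian ∧ (Qp A).coeff (n - k) = 1 ∧ 0 ≤ A.trace} := by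
    filter_upwards [hmem] with r hr
    rw [← hess_eq hK (subset_closure hr)]
    have h3 := garding_GC hkn (g2 _ hr).1
    refine ⟨h3.1, by rw [← sigma_coeff hkn h3.1]; exact (g2 _ hr).2, ?_⟩
    rw [trace_coeff (by omega) h3.1]
    exact (h3.2 (n - 1) (by omega) (by omega)).le
  have hcl : IsClosed {A : Matrix (Fin n) (Fin n) ℝ |
      A.IsHermitian ∧ (Qp A).coeff (n - k) = 1 ∧ 0 ≤ A.trace} := by
    refine IsClosed.inter ?_ (IsClosed.inter ?_ ?_)
    · exact isClosed_eq (continuous_id.matrix_conjTranspose) continuous_id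
    · exact isClosed_eq (cont_coeff _) continuous_const
    · exact isClosed_le continuous_const continuous_id.matrix_trace
  rw [hH]
  exact hcl.mem_of_tendsto ht2 hev

lemma main_eps {k : ℕ} (hk : 1 ≤ k) (hkn : k ≤ n) {Ω₁ : Set (Euc n)} (hΩo : IsOpen Ω₁)
    (hc : Convex ℝ Ω₁)
    (hΩb : IsBounded Ω₁) {ε₀ ε : ℝ} (hball : closedBall (0 : Euc n) ε₀ ⊆ Ω₁)
    (hε : 0 < ε) (hεε : ε < ε₀) {u : Euc n → ℝ} {M M' : ℝ} (hM : M' < M)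
    (hu : IsSol k Ω₁ 0 ε M u) (hu0 : ∀ x ∈ ringSet Ω₁ 0 ε, u x ≤ 0)
    {Λ Rad κ : ℝ} (hΛ : 0 ≤ Λ) (hRad0 : 0 ≤ Rad) (hRad : ∀ x ∈ closure Ω₁, ‖x‖ ≤ Rad)
    (hbd : ∀ x ∈ frontier Ω₁, ∀ y ∈ ringSet Ω₁ 0 ε, - (Λ * ‖y - x‖) ≤ u y)
    (hκ1 : 1 / cnk n k < κ)
    (hs : ∀ x ∈ frontier Ω₁, κ / 2 * (‖x‖ ^ 2 - ε ^ 2) ≤ M')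
    {C : ℝ} (hC : C = Λ * 2 * Rad / (M - M') + 1)
    {p : Euc n} (hp : ‖p‖ = ε) :
    -(n:ℝ) * fderivWithin ℝ u (ringSet Ω₁ (0 : Euc n) ε) p (ε⁻¹ • p) / ε ≤
            iteratedFDerivWithin ℝ 2 u (ringSet Ω₁ (0 : Euc n) ε) p
              ![ε⁻¹ • p, ε⁻¹ • p] ∧
          iteratedFDerivWithin ℝ 2 u (ringSet Ω₁ (0 : Euc n) ε) p
              ![ε⁻¹ • p, ε⁻¹ • p] ≤
            (2 * C ^ 2 + 1 + 2 ^ (k - 1) * n.choose k) *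
              fderivWithin ℝ u (ringSet Ω₁ (0 : Euc n) ε) p (ε⁻¹ • p) / ε := by
  have hcp := cnk_pos hkn
  have hκ0 : 0 < κ := lt_trans (by positivity) hκ1
  have hMM : 0 < M - M' := by linarith
  have hCpos : 0 < C := by rw [hC]; positivity
  have hquad := sol_ge_quad hkn hΩo hΩb hball hε hεε hu hκ0 (by
    rw [← cnk_inv hk hkn]
    have : (0:ℝ) < n.choose k := by exact_mod_cast Nat.choose_pos hkn
    gcongr) (fun x hx => (hs x hx).trans hM.le)
  have hrot := fun {η t} => rot_compare (η := η) (t := t) (κ := κ) (Rad := Rad) hk hkn hΩo hΩb hball hε hεε hM.le hu hu0 hΛ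
  have hlim := fun {H} => limit_hess (H := H) hk hkn hΩo hc hball hε hεε hu hp
  obtain ⟨g1, g2, g3, g4⟩ := hu
  have hK : UniqueDiffOn ℝ (ringSet Ω₁ (0 : Euc n) ε) := ring_unique hΩo hc hball hε hεε
  have hS : ∀ x, ‖x‖ = ε → x ∈ ringSet Ω₁ (0 : Euc n) ε := fun x hx => by
    rw [ring_eq hball hε hεε]
    exact ⟨subset_closure (hball (by simp [hx]; linarith)), hx.ge⟩
  have hus : ∀ x, ‖x‖ = ε → u x = -M := fun x hx => g4 x (by simpa using hx)
  set δ' := ε₀ / ε - 1 with hδ'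
  have hδpos : 0 < δ' := by
    rw [hδ', sub_pos, lt_div_iff₀ hε]; linarith
  have hrad : ∀ q, ‖q‖ = ε → ∀ r ∈ Icc 0 δ', (1 + r) • q ∈ ringSet Ω₁ (0 : Euc n) ε := by
    intro q hq r hr
    rw [ring_eq hball hε hεε]
    refine ⟨subset_closure (near_scale hball hε hεε hq hr.1 hr.2), ?_⟩
    change ε ≤ _
    rw [scale_norm hq hr.1]
    nlinarith [hr.1]
  rw [iteratedFDerivWithin_two_apply _ hK (hS p hp)]
  have hlim' := hlim (hS p hp) rfl
  set K := ringSet Ω₁ (0 : Euc n) ε with hKdef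
  set F := fderivWithin ℝ u K with hFdef
  set H := fderivWithin ℝ F K p with hHdef
  have hF : ∀ x ∈ K, HasFDerivWithinAt u (F x) K x := fun x hx =>
    (g1.differentiableOn (by norm_num) x hx).hasFDerivWithinAt
  have hH : HasFDerivWithinAt F H K p :=
    ((fd_diff hK g1).differentiableOn (by norm_num) p (hS p hp)).hasFDerivWithinAt
  -- lower bound for the normal derivative
  have hnor : κ * ε ^ 2 ≤ F p p := by
    have h1 := radial_deriv (hF p (hS p hp)) (hrad p hp)
    have h2 : HasDerivAt (fun r : ℝ => κ / 2 * (((1 + r) * ε) ^ 2 - ε ^ 2)) (κ * ε ^ 2) 0 := by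
      have := ((((((hasDerivAt_id (0:ℝ)).const_add 1).mul_const ε).pow 2).sub_const (ε ^ 2)).const_mul (κ / 2))
      refine this.congr_deriv ?_
      simp
      ring
    have h3 := rd_nonneg hδpos ((h1.add_const M).sub h2.hasDerivWithinAt)
      (by simp [hus p hp]) (fun r hr => by
        have := hquad _ (hrad p hp r hr)
        rw [scale_norm hp hr.1] at this
        change 0 ≤ (u ((1 + r) • p) + M) - κ / 2 * (((1 + r) * ε) ^ 2 - ε ^ 2)
        linarith)
    linarith
  have hrotF : ∀ τ, ‖τ‖ = ε → ⟪p, τ⟫ = 0 → ∀ θ, |θ| ≤ 1 / (2 * C) →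
      (1 - C * |θ|) * F p p ≤ F (circ p τ θ) (circ p τ θ) := by
    intro τ hτ hpτ θ hθ
    rcases eq_or_ne θ 0 with h0 | h0
    · rw [h0, circ_zero]; simp
    have habs : 0 < |θ| := abs_pos.2 h0
    have ht1 : C * |θ| < 1 := by
      have : C * |θ| ≤ C * (1 / (2 * C)) := by gcongr
      have e : C * (1 / (2 * C)) = 1 / 2 := by field_simp
      linarith
    obtain ⟨R, hR1, hR2⟩ := exists_rot (e := ε⁻¹ • p) (f := ε⁻¹ • τ)
      (by rw [norm_smul, hp, norm_inv, Real.norm_of_nonneg hε.le, inv_mul_cancel₀ hε.ne'])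
      (by rw [norm_smul, hτ, norm_inv, Real.norm_of_nonneg hε.le, inv_mul_cancel₀ hε.ne'])
      (by rw [real_inner_smul_left, real_inner_smul_right, hpτ]; simp) θ
    have hRp : R p = circ p τ θ := by
      have : R p = ε • R (ε⁻¹ • p) := by
        rw [map_smul, smul_smul, mul_inv_cancel₀ hε.ne', one_smul]
      have e : ∀ (c : ℝ) (v : Euc n), ε • c • ε⁻¹ • v = c • v := fun c v => by
        rw [smul_smul, smul_smul, mul_comm ε c, mul_assoc, mul_inv_cancel₀ hε.ne', mul_one]
      rw [this, hR1, circ, smul_add, e, e]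
    have hcmp := hrot (η := 2 * |θ|) (t := C * |θ|) (by positivity) hRad hbd hκ1 hs R hR2
      (by positivity) ht1 (by
        have : C * (M - M') = Λ * 2 * Rad + (M - M') := by rw [hC]; field_simp
        nlinarith)
    have hq : ‖circ p τ θ‖ = ε := circ_norm hp hτ hpτ θ
    have d1 := radial_deriv (hF p (hS p hp)) (hrad p hp)
    have d2 := radial_deriv (hF _ (hS _ hq)) (hrad _ hq)
    have h3 := rd_nonneg hδpos ((d2.add_const M).sub ((d1.add_const M).const_mul (1 - C * |θ|)))
      (by simp [hus p hp, hus _ hq]) (fun r hr => by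
        have m1 := near_scale hball hε hεε hp hr.1 hr.2
        have m2 := near_scale hball hε hεε hq hr.1 hr.2
        have e : R ((1 + r) • p) = (1 + r) • circ p τ θ := by rw [map_smul, hRp]
        have nn := scale_norm hp hr.1
        have ng : ε ≤ (1 + r) * ε := by nlinarith [hr.1]
        have := hcmp ((1 + r) • p) (subset_closure m1) (by rw [e]; exact subset_closure m2)
          (by rw [nn]; exact ng)
        rw [e, nn] at this
        change 0 ≤ (u ((1 + r) • circ p τ θ) + M) - (1 - C * |θ|) * (u ((1 + r) • p) + M)
        have h5 : 0 ≤ ((1 + r) * ε) ^ 2 - ε ^ 2 := by nlinarith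
        have h6 : 0 ≤ C * |θ| * (κ / 2 * (((1 + r) * ε) ^ 2 - ε ^ 2)) := by positivity
        linarith)
    linarith
  -- pass to the unit normal
  set ν : Euc n := ε⁻¹ • p with hνdef
  have hν : ‖ν‖ = 1 := by
    rw [hνdef, norm_smul, hp, norm_inv, Real.norm_of_nonneg hε.le, inv_mul_cancel₀ hε.ne']
  have hpν : p = ε • ν := by rw [hνdef, smul_smul, mul_inv_cancel₀ hε.ne', one_smul]
  set a := F p ν / ε with hadef
  have hFpp : F p p = ε ^ 2 * a := by
    have : F p p = ε * F p ν := by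
      conv_lhs => rw [hpν]
      rw [map_smul, smul_eq_mul, ← hpν]
    rw [this, hadef]; field_simp
  have hε2 : 0 < ε ^ 2 := by positivity
  have haκ : κ ≤ a := by
    rw [hFpp, mul_comm] at hnor
    exact le_of_mul_le_mul_left hnor hε2
  have ha : 0 < a := by linarith
  have ha1 : 1 ≤ n.choose k * a ^ k := by
    rw [← cnk_inv hk hkn]
    have : 1 / cnk n k ≤ a := by linarith
    gcongr
  have htp : ∀ τ : Euc n, ‖τ‖ = 1 → ⟪ν, τ⟫ = 0 → ‖ε • τ‖ = ε ∧ ⟪p, ε • τ⟫ = 0 := by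
    intro τ h1 h2
    constructor
    · rw [norm_smul, h1, Real.norm_of_nonneg hε.le, mul_one]
    · rw [hpν, real_inner_smul_left, real_inner_smul_right, h2]; simp
  have ht : ∀ τ, ‖τ‖ = 1 → ⟪ν, τ⟫ = 0 → H τ τ = a := by
    intro τ h1 h2
    obtain ⟨e1, e2⟩ := htp τ h1 h2
    have := bd_tan hF hH hS hus hp e1 e2
    rw [hFpp] at this
    simp only [map_smul, _root_.smul_apply, smul_eq_mul] at this
    have h5 : ε ^ 2 * H τ τ = ε ^ 2 * a := by linarith
    exact mul_left_cancel₀ hε2.ne' h5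
  have hm : ∀ τ, ‖τ‖ = 1 → ⟪ν, τ⟫ = 0 → |H τ ν| ≤ C * a := by
    intro τ h1 h2
    obtain ⟨e1, e2⟩ := htp τ h1 h2
    have := bd_mix hF hH hS hus hp e1 e2 (C := C) (δ := 1 / (2 * C)) (by positivity)
      (hrotF _ e1 e2)
    rw [hFpp] at this
    have e3 : H (ε • τ) p = ε ^ 2 * H τ ν := by
      conv_lhs => rw [hpν]
      simp only [map_smul, _root_.smul_apply, smul_eq_mul]
      ring
    rw [e3, abs_mul, abs_of_pos hε2] at this
    refine le_of_mul_le_mul_left ?_ hε2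
    linarith
  obtain ⟨l1, l2, l3⟩ := hlim'
  have htr := trace_id l1 hν ht
  have hup := upper_alg hk hkn l1 l2 hν ha ha1 ht hm
  change -(n:ℝ) * F p ν / ε ≤ H ν ν ∧ H ν ν ≤ _ * F p ν / ε
  rw [mul_div_assoc, mul_div_assoc, ← hadef]
  refine ⟨?_, hup⟩
  rw [htr] at l3
  linarith

end MainPart
/-- `C²` bound on `∂B_ε(0)` in the double normal direction. -/
theorem statement10 {n k : ℕ} (hk : 1 ≤ k) (hkn : k ≤ n)
    (Ω₁ : Set (Euc n)) (hΩo : IsOpen Ω₁) (hΩconv : Convex ℝ Ω₁)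
    (hΩb : IsBounded Ω₁) (hΩs : HasSmoothBoundary Ω₁)
    (ε₀ : ℝ) (hε₀ : 0 < ε₀) (hball : closedBall (0 : Euc n) ε₀ ⊆ Ω₁)
    (ψ : Euc n → ℝ) (hψ : IsSol22 k Ω₁ ψ)
    (M₁ : ℝ) (hM₁ : 0 < M₁) (hM₁ψ : ∀ x ∈ closure Ω₁, -ψ x < M₁)
    (hM₁sub : ∀ ε ∈ Ioo (0:ℝ) ε₀, ∀ x ∈ frontier Ω₁, underSol k (0 : Euc n) ε M₁ x ≤ 0)
    (M : ℝ) (hM : M₁ < M)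
 :
    ∃ C₁ C₂ : ℝ, 0 < C₁ ∧ 0 < C₂ ∧ ∀ ε ∈ Ioo (0:ℝ) ε₀, ∀ u : Euc n → ℝ,
      IsSol k Ω₁ (0 : Euc n) ε M u → ∀ p ∈ sphere (0 : Euc n) ε,
        -C₁ * fderivWithin ℝ u (ringSet Ω₁ (0 : Euc n) ε) p (ε⁻¹ • p) / ε ≤
            iteratedFDerivWithin ℝ 2 u (ringSet Ω₁ (0 : Euc n) ε) p
              ![ε⁻¹ • p, ε⁻¹ • p] ∧
          iteratedFDerivWithin ℝ 2 u (ringSet Ω₁ (0 : Euc n) ε) p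
              ![ε⁻¹ • p, ε⁻¹ • p] ≤
            C₂ * fderivWithin ℝ u (ringSet Ω₁ (0 : Euc n) ε) p (ε⁻¹ • p) / ε := by
  have hn0 : (0 : Euc n) ∈ Ω₁ := hball (by simp; linarith)
  have hcp := cnk_pos hkn
  have hch : (0:ℝ) < n.choose k := by exact_mod_cast Nat.choose_pos hkn
  have hψ2 : ContDiffOn ℝ 2 ψ (closure Ω₁) := hψ.1.of_le two_le_top
  obtain ⟨L, hL0, hL⟩ := psi_lip hΩo hΩconv hΩb ⟨0, hn0⟩ hψ2
  obtain ⟨r, hr, hfr⟩ := frontier_far2 hΩo hΩb hball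
  obtain ⟨Rad, hRad⟩ := hΩb.closure.exists_norm_le
  have hRad0 : 0 ≤ Rad := (norm_nonneg _).trans (hRad 0 (subset_closure hn0))
  -- uniform negativity of the auxiliary solution
  set d := 1 / cnk n k / 2 with hd
  have hd0 : 0 < d := by positivity
  have hd1 : n.choose k * d ^ k < 1 := by
    rw [← cnk_inv hk hkn, hd]
    have h1 : 0 < 1 / cnk n k := by positivity
    have : (1 / cnk n k / 2) ^ k < (1 / cnk n k) ^ k :=
      pow_lt_pow_left₀ (half_lt_self h1) (by positivity) (by omega)
    gcongr
  have hψle := psi_le hkn hΩo hΩb hψ hd0 hd1 (by linarith) hfr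
  set m := d / 2 * (r ^ 2 - ε₀ ^ 2) with hm
  have hm0 : 0 < m := by
    have : 0 < r ^ 2 - ε₀ ^ 2 := by nlinarith
    positivity
  have hψm : ∀ x ∈ closedBall (0 : Euc n) ε₀, ψ x ≤ -m := by
    intro x hx
    have h1 := hψle x (subset_closure (hball hx))
    rw [mem_closedBall_zero_iff] at hx
    have h2 : ‖x‖ ^ 2 ≤ ε₀ ^ 2 := by
      have := norm_nonneg x
      gcongr
    nlinarith
  set K₀ := 2 + M / m with hK₀
  have hM0 : 0 < M := by linarith
  have hK1 : 1 < K₀ := by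
    have : 0 < M / m := by positivity
    linarith
  have hKb : ∀ x ∈ closedBall (0 : Euc n) ε₀, K₀ * ψ x ≤ -M := by
    intro x hx
    have h1 := hψm x hx
    have h2 : K₀ * m = 2 * m + M := by rw [hK₀]; field_simp
    nlinarith
  -- the strict radial subsolution
  set D := (M - M₁) / (2 * M₁) with hD
  have hD0 : 0 < D := by
    have : 0 < M - M₁ := by linarith
    positivity
  set κ := (1 + D) * (1 / cnk n k) with hκ
  have hκ1 : 1 / cnk n k < κ := by
    have : 0 < 1 / cnk n k := by positivity
    rw [hκ]; nlinarith
  set M' := (1 + D) * M₁ with hM'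
  have hM'M : M' < M := by
    have : M' = (M + M₁) / 2 := by rw [hM', hD]; field_simp; ring
    linarith
  set C := (K₀ * L) * 2 * Rad / (M - M') + 1 with hC
  refine ⟨n, 2 * C ^ 2 + 1 + 2 ^ (k - 1) * n.choose k, by
    have : 0 < n := by omega
    exact_mod_cast this, by positivity, ?_⟩
  intro ε hε u hu p hp
  have hs : ∀ x ∈ frontier Ω₁, κ / 2 * (‖x‖ ^ 2 - ε ^ 2) ≤ M' := by
    intro x hx
    have h1 := hM₁sub ε hε x hx
    rw [underSol, sub_zero] at h1
    have h2 : κ / 2 * (‖x‖ ^ 2 - ε ^ 2) =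
        (1 + D) * (‖x‖ ^ 2 / (2 * cnk n k) - ε ^ 2 / (2 * cnk n k)) := by
      rw [hκ]; field_simp
    rw [h2, hM']
    apply mul_le_mul_of_nonneg_left _ (by linarith)
    linarith
  have hup := sol_ge_psi hk hkn hΩo hΩb hball hε.1 hε.2 hψ hu hK1 hKb
  have hu0 := sol_le_zero hk hkn hΩo hΩb hball hε.1 hε.2 hM0.le hu
  have hbd : ∀ x ∈ frontier Ω₁, ∀ y ∈ ringSet Ω₁ 0 ε, -((K₀ * L) * ‖y - x‖) ≤ u y := by
    intro x hx y hy
    have h1 := hup y hy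
    have h2 := hL x (frontier_subset_closure hx) y (closure_mono sdiff_subset hy)
    rw [hψ.2.2 x hx, sub_zero] at h2
    have h3 := (abs_le.1 h2).1
    nlinarith
  exact main_eps hk hkn hΩo hΩconv hΩb hball hε.1 hε.2 hM'M hu hu0 (by positivity) hRad0 hRad
    hbd hκ1 hs hC (by simpa using hp)
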